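/- arXiv:1704.07853 — 8 statements merged into one kernel-verified Lean document; each statement's English description precedes it below -/
import Mathlib

section
/- Let R be a commutative ring and L a Lie algebra over R generated (as a Lie algebra) by finitely many elements x₁, …, xₙ. Then every element z of the R-submodule of L generated by all brackets ⁅a, b⁆ (a, b ∈ L) can be written as z = ⁅u₁, x₁⁆ + … + ⁅uₙ, xₙ⁆ for some u₁, …, uₙ ∈ L; that is, L² = Lx₁ + … + Lxₙ. -/
/-- If every bracket `⁅a, s⁆` with `s` in a generating set lies in a submodule `M`, then every
bracket lies in `M`. -/
theorem lie_mem_of_lieSpan_eq_top {R L : Type*} [CommRing R] [LieRing L] [LieAlgebra R L]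
    {s : Set L} (hs : LieSubalgebra.lieSpan R L s = ⊤) (M : Submodule R L)
    (hM : ∀ a : L, ∀ y ∈ s, ⁅a, y⁆ ∈ M) (a b : L) : ⁅a, b⁆ ∈ M := by
  have hb : b ∈ LieSubalgebra.lieSpan R L s := hs ▸ LieSubalgebra.mem_top b
  induction hb using LieSubalgebra.lieSpan_induction generalizing a with
  | mem y hy => exact hM a y hy
  | zero => simp
  | smul r y _ ih => rw [lie_smul]; exact M.smul_mem r (ih a)
  | add y z _ _ ihy ihz => rw [lie_add]; exact M.add_mem (ihy a) (ihz a)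
  | lie y z _ _ ihy ihz =>
    rw [leibniz_lie, ← lie_skew y ⁅a, z⁆]
    exact M.add_mem (ihz _) (M.neg_mem (ihy _))

/-- If a Lie algebra `L` over a commutative ring `R` is generated (as a Lie algebra)
by finitely many elements `x₁, …, xₙ`, then every element of the `R`-submodule `L²`
generated by all brackets can be written as `⁅u₁, x₁⁆ + … + ⁅uₙ, xₙ⁆`. -/
theorem square_eq_sum_of_generators {R L : Type*} [CommRing R] [LieRing L] [LieAlgebra R L]
    (n : ℕ) (x : Fin n → L) (hx : LieSubalgebra.lieSpan R L (Set.range x) = ⊤)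
    (z : L) (hz : z ∈ Submodule.span R {w : L | ∃ a b : L, w = ⁅a, b⁆}) :
    ∃ u : Fin n → L, z = ∑ i, ⁅u i, x i⁆ := by
  let M : Submodule R L :=
    { carrier := {w | ∃ u : Fin n → L, w = ∑ i, ⁅u i, x i⁆}
      zero_mem' := ⟨0, by simp⟩
      add_mem' := by
        rintro _ _ ⟨u, rfl⟩ ⟨v, rfl⟩
        exact ⟨u + v, by simp [Finset.sum_add_distrib]⟩
      smul_mem' := by
        rintro r _ ⟨u, rfl⟩
        exact ⟨r • u, by simp [Finset.smul_sum]⟩ }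
  have hM : ∀ a : L, ∀ y ∈ Set.range x, ⁅a, y⁆ ∈ M := by
    rintro a _ ⟨j, rfl⟩
    refine ⟨Pi.single j a, ?_⟩
    rw [Finset.sum_eq_single j (fun i _ hij => by simp [hij]) (by simp), Pi.single_eq_same]
  have hle : Submodule.span R {w : L | ∃ a b : L, w = ⁅a, b⁆} ≤ M := by
    rw [Submodule.span_le]
    rintro _ ⟨a, b, rfl⟩
    exact lie_mem_of_lieSpan_eq_top hx M hM a b
  exact hle hz
end

section
/- Let R be an integral domain and L the free Lie algebra over R on a set X. If u, v ∈ L are nonzero and ⁅u, v⁆ = 0, then there exist nonzero α, β ∈ R such that α • u = β • v. -/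
namespace List

variable {X : Type*} [LinearOrder X]

/-- If `u < v` lexicographically then either `u` is a prefix of `v`, or the comparison is decided
at a position where both words have a letter, so that it survives any extension. -/
theorem isPrefix_or_append_lt_append_of_lt {u v : List X} (h : u < v) :
    u <+: v ∨ ∀ s t, u ++ s < v ++ t := by
  induction u generalizing v with
  | nil => exact Or.inl nil_prefix
  | cons a u ih =>
    cases v with
    | nil => exact absurd h (not_lt_nil _)
    | cons b v =>
      rcases cons_lt_cons_iff.1 h with hab | ⟨rfl, huv⟩
      · exact Or.inr fun s t => cons_lt_cons_iff.2 (Or.inl hab)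
      · rcases ih huv with hp | hlt
        · exact Or.inl ((prefix_cons_inj a).2 hp)
        · exact Or.inr fun s t => cons_lt_cons_iff.2 (Or.inr ⟨rfl, hlt s t⟩)

theorem append_le_append_of_length_eq {u v s t : List X} (hl : u.length = v.length)
    (huv : u ≤ v) (hst : s ≤ t) : u ++ s ≤ v ++ t := by
  rcases huv.eq_or_lt with rfl | huv
  · rcases hst.eq_or_lt with rfl | hst
    · exact le_rfl
    · exact (append_left_lt hst).le
  · rcases isPrefix_or_append_lt_append_of_lt huv with h | h
    · exact absurd (h.eq_of_length hl) huv.ne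
    · exact (h s t).le

theorem le_append_right_self (u v : List X) : u ≤ u ++ v :=
  not_lt.1 (le_append_left (l₁ := u) (l₂ := v))

/-- Over a well-ordered alphabet, the lexicographic order on words of bounded length is
well-founded. -/
theorem wellFounded_lt_of_length_le [WellFoundedLT X] (n : ℕ) :
    WellFounded fun u v : List X => u.length ≤ n ∧ u < v := by
  induction n with
  | zero =>
    refine ⟨fun v => ⟨_, fun u hu => ⟨_, fun w hw => ?_⟩⟩⟩
    obtain rfl : u = [] := length_eq_zero_iff.1 (Nat.le_zero.1 hu.1)
    exact absurd hw.2 (not_lt_nil _)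
  | succ n ih =>
    have acc_nil : Acc (fun u v : List X => u.length ≤ n + 1 ∧ u < v) [] :=
      ⟨_, fun u hu => absurd hu.2 (not_lt_nil _)⟩
    have acc_cons : ∀ a : X, ∀ v : List X,
        Acc (fun u v : List X => u.length ≤ n + 1 ∧ u < v) (a :: v) := by
      intro a
      induction a using WellFoundedLT.induction with
      | ind a iha =>
      intro v
      induction v using ih.induction with
      | _ v ihv =>
      refine ⟨_, fun u hu => ?_⟩
      cases u with
      | nil => exact acc_nil
      | cons b u =>
        rcases cons_lt_cons_iff.1 hu.2 with h | ⟨rfl, h⟩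
        · exact iha b h u
        · exact ihv u ⟨by simpa using hu.1, h⟩
    exact ⟨fun v => by cases v with
      | nil => exact acc_nil
      | cons a v => exact acc_cons a v⟩

/-- A word is Lyndon if it is smaller than each of its nonempty proper suffixes. (The empty word
is allowed.) -/
def IsLyndon (w : List X) : Prop :=
  ∀ x y : List X, x ≠ [] → y ≠ [] → w = x ++ y → w < y

theorem IsLyndon.append_lt {u v : List X} (hv : v.IsLyndon) (hu : u ≠ []) (h : u < v) :
    u ++ v < v := by
  rcases isPrefix_or_append_lt_append_of_lt h with ⟨y, rfl⟩ | h
  · have hy : y ≠ [] := by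
      rintro rfl
      simp at h
    exact append_left_lt (hv u y hu hy rfl)
  · simpa using h v []

theorem IsLyndon.append_lt_append {u v : List X} (hv : v.IsLyndon) (hu : u ≠ []) (h : u < v) :
    u ++ v < v ++ u :=
  (hv.append_lt hu h).trans_le (le_append_right_self v u)

theorem IsLyndon.eq_of_append_comm {u v : List X} (hu : u.IsLyndon) (hv : v.IsLyndon)
    (hu₀ : u ≠ []) (hv₀ : v ≠ []) (h : u ++ v = v ++ u) : u = v := by
  rcases lt_trichotomy u v with huv | huv | huv
  · exact absurd h (hv.append_lt_append hu₀ huv).ne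
  · exact huv
  · exact absurd h (hu.append_lt_append hv₀ huv).ne'

end List

namespace FreeMagma

variable {X : Type*}

/-- The word of leaves of a tree, read from left to right. -/
def leaves : FreeMagma X → List X
  | of x => [x]
  | mul a b => leaves a ++ leaves b

theorem leaves_ne_nil : ∀ t : FreeMagma X, t.leaves ≠ []
  | of x => by simp [leaves]
  | mul a b => by simp [leaves, leaves_ne_nil a]

variable [LinearOrder X]

/-- `t` is a leaf, or the word of its right subtree is at least `v`. -/
def RightFactorGE (v : List X) : FreeMagma X → Prop
  | of _ => True
  | mul _ b => v ≤ b.leaves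

/-- The trees that give the standard bracketings of Lyndon words. -/
def IsLyndonTree : FreeMagma X → Prop
  | of _ => True
  | mul a b => IsLyndonTree a ∧ IsLyndonTree b ∧ a.leaves < b.leaves ∧ RightFactorGE b.leaves a

theorem IsLyndonTree.isLyndon_and_le_suffix : ∀ {t : FreeMagma X}, t.IsLyndonTree →
    t.leaves.IsLyndon ∧ ∀ v, RightFactorGE v t → ∀ x y : List X, x ≠ [] → y ≠ [] →
      t.leaves = x ++ y → v ≤ y
  | of z, _ => by
    have key : ∀ x y : List X, x ≠ [] → y ≠ [] → (of z).leaves ≠ x ++ y := by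
      intro x y hx hy h
      have := congrArg List.length h
      have := List.length_pos_iff.2 hx
      have := List.length_pos_iff.2 hy
      simp [leaves] at *
      omega
    exact ⟨fun x y hx hy h => absurd h (key x y hx hy),
      fun v _ x y hx hy h => absurd h (key x y hx hy)⟩
  | mul a b, ⟨ha, hb, hab, hr⟩ => by
    have iha := ha.isLyndon_and_le_suffix.2 _ hr
    have ihb := hb.isLyndon_and_le_suffix.1
    have key : ∀ x y : List X, x ≠ [] → y ≠ [] → (mul a b).leaves = x ++ y → b.leaves ≤ y := by
      intro x y hx hy h
      rcases List.append_eq_append_iff.1 h with ⟨c, hc, hc'⟩ | ⟨c, hc, hc'⟩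
      · by_cases h0 : c = []
        · simp [hc', h0]
        · exact (ihb c y h0 hy hc').le
      · by_cases h0 : c = []
        · simp [hc', h0]
        · exact (iha x c hx h0 hc).trans (hc' ▸ List.le_append_right_self c _)
    exact ⟨fun x y hx hy h => (ihb.append_lt a.leaves_ne_nil hab).trans_le (key x y hx hy h),
      fun v hv x y hx hy h => le_trans hv (key x y hx hy h)⟩

theorem IsLyndonTree.isLyndon {t : FreeMagma X} (ht : t.IsLyndonTree) : t.leaves.IsLyndon :=
  ht.isLyndon_and_le_suffix.1

/-- The right subtree of a Lyndon tree carries the longest proper Lyndon suffix of its word. -/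
theorem IsLyndonTree.suffix_eq_nil {a b : FreeMagma X} {x c : List X}
    (h : (mul a b).IsLyndonTree) (hx : x ≠ []) (hc : a.leaves = x ++ c)
    (hl : (c ++ b.leaves).IsLyndon) : c = [] := by
  by_contra h0
  have hle := h.1.isLyndon_and_le_suffix.2 _ h.2.2.2 x c hx h0 hc
  have hlt := hl c b.leaves h0 b.leaves_ne_nil rfl
  exact absurd (hle.trans (List.le_append_right_self c b.leaves)) hlt.not_ge

theorem IsLyndonTree.eq_of_leaves_eq : ∀ {s t : FreeMagma X}, s.IsLyndonTree → t.IsLyndonTree →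
    s.leaves = t.leaves → s = t
  | of x, of y, _, _, h => by
    obtain rfl : x = y := by simpa [leaves] using h
    rfl
  | of x, mul a b, _, _, h => by
    have := congrArg List.length h
    have := List.length_pos_iff.2 a.leaves_ne_nil
    have := List.length_pos_iff.2 b.leaves_ne_nil
    simp [leaves] at *
    omega
  | mul a b, of x, _, _, h => by
    have := congrArg List.length h
    have := List.length_pos_iff.2 a.leaves_ne_nil
    have := List.length_pos_iff.2 b.leaves_ne_nil
    simp [leaves] at *
    omega
  | mul a b, mul a' b', hs, ht, h => by
    have key : a.leaves = a'.leaves ∧ b.leaves = b'.leaves := by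
      rcases List.append_eq_append_iff.1 h with ⟨c, hc, hc'⟩ | ⟨c, hc, hc'⟩
      · have := ht.suffix_eq_nil a.leaves_ne_nil hc (hc' ▸ hs.2.1.isLyndon)
        subst this
        simp_all
      · have := hs.suffix_eq_nil a'.leaves_ne_nil hc (hc' ▸ ht.2.1.isLyndon)
        subst this
        simp_all
    rw [hs.1.eq_of_leaves_eq ht.1 key.1, hs.2.1.eq_of_leaves_eq ht.2.1 key.2]

end FreeMagma

namespace FreeLieAlgebra

variable (R : Type*) [CommRing R] {X : Type*}

/-- The iterated Lie bracket in the free Lie algebra described by a tree. -/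
noncomputable def bracket : FreeMagma X → FreeLieAlgebra R X
  | .of x => of R x
  | .mul a b => ⁅bracket a, bracket b⁆

variable [LinearOrder X]

/-- The span of the Lyndon brackets of degree `n` whose words are smaller than `m`. -/
noncomputable def lyndonSpan (n : ℕ) (m : List X) : Submodule R (FreeLieAlgebra R X) :=
  Submodule.span R (bracket R '' {t | t.IsLyndonTree ∧ t.leaves.length = n ∧ t.leaves < m})

variable {R}

theorem lyndonSpan_mono {n : ℕ} {m m' : List X} (h : m ≤ m') :
    lyndonSpan R n m ≤ lyndonSpan R n m' :=
  Submodule.span_mono (Set.image_mono fun _ ht => ⟨ht.1, ht.2.1, ht.2.2.trans_le h⟩)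

theorem lie_mem_lyndonSpan_of_forall {k n : ℕ} {m : List X} {s : FreeMagma X}
    (H : ∀ t : FreeMagma X, t.IsLyndonTree → t.leaves.length = k → t.leaves < m →
      ⁅bracket R s, bracket R t⁆ ∈ lyndonSpan R n m)
    {p : FreeLieAlgebra R X} (hp : p ∈ lyndonSpan R k m) :
    ⁅bracket R s, p⁆ ∈ lyndonSpan R n m := by
  induction hp using Submodule.span_induction with
  | mem x hx =>
    obtain ⟨t, ⟨ht, hk, hm⟩, rfl⟩ := hx
    exact H t ht hk hm
  | zero => simp
  | add x y _ _ hx hy => simpa using add_mem hx hy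
  | smul c x _ hx => simpa using Submodule.smul_mem _ c hx

theorem lie_bracket_mem_lyndonSpan [WellFoundedLT X] (n : ℕ) :
    ∀ (m : List X) (s t : FreeMagma X), s.IsLyndonTree → t.IsLyndonTree →
      s.leaves.length + t.leaves.length = n → s.leaves < t.leaves → t.leaves = m →
      ⁅bracket R s, bracket R t⁆ ∈ lyndonSpan R n m := by
  induction n using Nat.strong_induction_on with
  | _ n ihn =>
  intro m
  induction m using (List.wellFounded_lt_of_length_le (X := X) n).induction with
  | _ m ihm =>
  have small : ∀ s t : FreeMagma X, s.IsLyndonTree → t.IsLyndonTree →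
      s.leaves.length + t.leaves.length = n → s.leaves < m → t.leaves < m →
      ⁅bracket R s, bracket R t⁆ ∈ lyndonSpan R n m := by
    intro s t hs ht hn hsm htm
    rcases lt_trichotomy s.leaves t.leaves with h | h | h
    · exact lyndonSpan_mono htm.le (ihm _ ⟨by omega, htm⟩ s t hs ht hn h rfl)
    · simp [hs.eq_of_leaves_eq ht h]
    · rw [← lie_skew]
      exact neg_mem (lyndonSpan_mono hsm.le
        (ihm _ ⟨by omega, hsm⟩ t s ht hs (by omega) h rfl))
  rintro s t hs ht hn hst rfl
  by_cases hr : s.RightFactorGE t.leaves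
  · exact Submodule.subset_span ⟨.mul s t, ⟨⟨hs, ht, hst, hr⟩, by simpa [FreeMagma.leaves] using hn,
      ht.isLyndon.append_lt s.leaves_ne_nil hst⟩, rfl⟩
  cases s using FreeMagma.casesOn with
  | of x => exact absurd trivial hr
  | mul a b =>
    have hb : b.leaves < t.leaves := not_le.1 hr
    have ha : a.leaves < t.leaves := (List.le_append_right_self _ _).trans_lt hst
    have hla := List.length_pos_iff.2 a.leaves_ne_nil
    have hlb := List.length_pos_iff.2 b.leaves_ne_nil
    replace hn : a.leaves.length + b.leaves.length + t.leaves.length = n := by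
      simpa [FreeMagma.leaves] using hn
    rw [bracket, lie_lie]
    exact sub_mem
      (lie_mem_lyndonSpan_of_forall
        (fun z hz hzl hzt => small a z hs.1 hz (by omega) ha hzt)
        (ihn (b.leaves.length + t.leaves.length) (by omega) _ b t hs.2.1 ht rfl hb rfl))
      (lie_mem_lyndonSpan_of_forall
        (fun z hz hzl hzt => small b z hs.2.1 hz (by omega) hb hzt)
        (ihn (a.leaves.length + t.leaves.length) (by omega) _ a t hs.1 ht rfl ha rfl))

theorem lie_bracket_mem_span [WellFoundedLT X] {s t : FreeMagma X}
    (hs : s.IsLyndonTree) (ht : t.IsLyndonTree) :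
    ⁅bracket R s, bracket R t⁆ ∈
      Submodule.span R (bracket R '' {t : FreeMagma X | t.IsLyndonTree}) := by
  have hle : ∀ n (m : List X), lyndonSpan R n m ≤
      Submodule.span R (bracket R '' {t : FreeMagma X | t.IsLyndonTree}) :=
    fun n m => Submodule.span_mono (Set.image_mono fun _ h => h.1)
  rcases lt_trichotomy s.leaves t.leaves with h | h | h
  · exact hle _ _ (lie_bracket_mem_lyndonSpan _ _ s t hs ht rfl h rfl)
  · simp [hs.eq_of_leaves_eq ht h]
  · rw [← lie_skew]
    exact neg_mem (hle _ _ (lie_bracket_mem_lyndonSpan _ _ t s ht hs rfl h rfl))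

variable (R X) in
/-- The span of the Lyndon brackets, as a Lie subalgebra. -/
noncomputable def lyndonSubalgebra [WellFoundedLT X] : LieSubalgebra R (FreeLieAlgebra R X) where
  __ := Submodule.span R (bracket R '' {t : FreeMagma X | t.IsLyndonTree})
  lie_mem' {x y} hx hy := by
    change x ∈ Submodule.span R _ at hx
    change y ∈ Submodule.span R _ at hy
    change ⁅x, y⁆ ∈ Submodule.span R _
    induction hx, hy using Submodule.span_induction₂ with
    | mem_mem x y hx hy =>
      obtain ⟨s, hs, rfl⟩ := hx
      obtain ⟨t, ht, rfl⟩ := hy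
      exact lie_bracket_mem_span hs ht
    | zero_left => simp
    | zero_right => simp
    | add_left x y z _ _ _ hx hy => simpa using add_mem hx hy
    | add_right x y z _ _ _ hx hy => simpa using add_mem hx hy
    | smul_left c x y _ _ h => simpa using Submodule.smul_mem _ c h
    | smul_right c x y _ _ h => simpa using Submodule.smul_mem _ c h

theorem mem_span_bracket [WellFoundedLT X] (u : FreeLieAlgebra R X) :
    u ∈ Submodule.span R (bracket R '' {t : FreeMagma X | t.IsLyndonTree}) := by
  let f : FreeLieAlgebra R X →ₗ⁅R⁆ lyndonSubalgebra R X :=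
    lift R fun x => ⟨of R x, Submodule.subset_span ⟨.of x, trivial, rfl⟩⟩
  have hf : (lyndonSubalgebra R X).incl.comp f = LieHom.id :=
    hom_ext fun x => by simp [f]
  have hu : ((f u : lyndonSubalgebra R X) : FreeLieAlgebra R X) = u := DFunLike.congr_fun hf u
  rw [← hu]
  exact (f u).2

end FreeLieAlgebra

namespace MonoidAlgebra

variable {R : Type*} [CommRing R] {X : Type*}

/-- The key by which monomials are compared: first by length, then by the reversed lexicographic
order. -/
def wordKey (w : FreeMonoid X) : ℕ ×ₗ (List X)ᵒᵈ :=
  toLex (w.toList.length, OrderDual.toDual w.toList)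

theorem wordKey_injective : Function.Injective (wordKey (X := X)) := fun w v h => by
  have := congrArg (fun z => (ofLex z).2) h
  simpa [wordKey] using this

variable [LinearOrder X]

theorem wordKey_le_iff {w v : FreeMonoid X} : wordKey w ≤ wordKey v ↔
    w.toList.length < v.toList.length ∨
      w.toList.length = v.toList.length ∧ v.toList ≤ w.toList := by
  simp [wordKey, Prod.Lex.toLex_le_toLex]

theorem length_le_of_wordKey_le {w v : FreeMonoid X} (h : wordKey w ≤ wordKey v) :
    w.toList.length ≤ v.toList.length := by
  rcases wordKey_le_iff.1 h with h | h <;> omega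

theorem wordKey_mul_le_mul {a b w v : FreeMonoid X} (ha : wordKey a ≤ wordKey w)
    (hb : wordKey b ≤ wordKey v) : wordKey (a * b) ≤ wordKey (w * v) := by
  have hla := length_le_of_wordKey_le ha
  have hlb := length_le_of_wordKey_le hb
  rw [wordKey_le_iff] at *
  simp only [FreeMonoid.toList_mul, List.length_append]
  rcases ha with ha | ⟨ha, ha'⟩
  · left; omega
  rcases hb with hb | ⟨hb, hb'⟩
  · left; omega
  exact Or.inr ⟨by omega, List.append_le_append_of_length_eq ha.symm ha' hb'⟩

theorem eq_and_eq_of_wordKey_le_of_mul_eq {a b w v : FreeMonoid X} (ha : wordKey a ≤ wordKey w)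
    (hb : wordKey b ≤ wordKey v) (h : a * b = w * v) : a = w ∧ b = v := by
  have hla := length_le_of_wordKey_le ha
  have hlb := length_le_of_wordKey_le hb
  have h' : a.toList ++ b.toList = w.toList ++ v.toList := congrArg FreeMonoid.toList h
  have hl := congrArg List.length h'
  simp only [List.length_append] at hl
  have hlen : a.toList.length = w.toList.length := by omega
  exact List.append_inj h' hlen

/-- `w` bounds the monomials of `f`, and `c` is the coefficient of `w` in `f`. -/
def HasLead (f : MonoidAlgebra R (FreeMonoid X)) (w : FreeMonoid X) (c : R) : Prop :=
  f.coeff w = c ∧ ∀ w', f.coeff w' ≠ 0 → wordKey w' ≤ wordKey w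

theorem HasLead.mul {f g : MonoidAlgebra R (FreeMonoid X)} {w v : FreeMonoid X} {c d : R}
    (hf : HasLead f w c) (hg : HasLead g v d) : HasLead (f * g) (w * v) (c * d) := by
  classical
  refine ⟨?_, fun z hz => ?_⟩
  · rw [coeff_mul_mul_of_uniqueMul, hf.1, hg.1]
    intro a b ha hb h
    exact eq_and_eq_of_wordKey_le_of_mul_eq (hf.2 a (Finsupp.mem_support_iff.1 ha))
      (hg.2 b (Finsupp.mem_support_iff.1 hb)) h
  · obtain ⟨a, ha, b, hb, rfl⟩ :=
      Finset.mem_mul.1 (support_coeff_mul_subset _ _ (Finsupp.mem_support_iff.2 hz))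
    exact wordKey_mul_le_mul (hf.2 a (Finsupp.mem_support_iff.1 ha))
      (hg.2 b (Finsupp.mem_support_iff.1 hb))

theorem HasLead.eq_of_ne_zero {f : MonoidAlgebra R (FreeMonoid X)} {w v : FreeMonoid X} {c d : R}
    (hf : HasLead f w c) (hf' : HasLead f v d) (hc : c ≠ 0) (hd : d ≠ 0) : w = v :=
  wordKey_injective (le_antisymm (hf'.2 w (hf.1 ▸ hc)) (hf.2 v (hf'.1 ▸ hd)))

theorem HasLead.sub_of_lt {f g : MonoidAlgebra R (FreeMonoid X)} {w v : FreeMonoid X} {c d : R}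
    (hf : HasLead f w c) (hg : HasLead g v d) (h : wordKey v < wordKey w) :
    HasLead (f - g) w c := by
  have hgw : g.coeff w = 0 := by
    by_contra h0
    exact absurd (hg.2 w h0) h.not_ge
  refine ⟨by simp [hf.1, hgw], fun z hz => ?_⟩
  by_cases hfz : f.coeff z = 0
  · exact (hg.2 z (by simpa [hfz] using hz)).trans h.le
  · exact hf.2 z hfz

end MonoidAlgebra

namespace FreeLieAlgebra

open MonoidAlgebra

attribute [local instance] LieRing.ofAssociativeRing

variable {R : Type*} [CommRing R] {X : Type*}

variable (R X) in
/-- The canonical map from the free Lie algebra to the free associative algebra. -/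
noncomputable def toMonoidAlgebra : FreeLieAlgebra R X →ₗ⁅R⁆ MonoidAlgebra R (FreeMonoid X) :=
  lift R fun x => MonoidAlgebra.of R (FreeMonoid X) (FreeMonoid.of x)

variable [LinearOrder X]

theorem hasLead_bracket : ∀ {t : FreeMagma X}, t.IsLyndonTree →
    HasLead (toMonoidAlgebra R X (bracket R t)) (FreeMonoid.ofList t.leaves) 1
  | .of x, _ => by
    have h : toMonoidAlgebra R X (bracket R (.of x)) = single (FreeMonoid.of x) 1 := by
      simp [toMonoidAlgebra, bracket]
    rw [h]
    refine ⟨by simp [FreeMagma.leaves], fun w hw => ?_⟩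
    have hx : FreeMonoid.of x = w := by
      by_contra h0
      exact hw (by simp [h0])
    exact hx ▸ le_rfl
  | .mul a b, ⟨ha, hb, hab, _⟩ => by
    have h₁ := (hasLead_bracket ha).mul (hasLead_bracket hb)
    have h₂ := (hasLead_bracket hb).mul (hasLead_bracket ha)
    have hlt := hb.isLyndon.append_lt_append a.leaves_ne_nil hab
    rw [bracket, LieHom.map_lie, LieRing.of_associative_ring_bracket]
    have := h₁.sub_of_lt h₂ <| by
      refine lt_of_le_of_ne (wordKey_le_iff.2 (Or.inr ⟨?_, hlt.le⟩))
        fun h => hlt.ne' (wordKey_injective h)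
      simp [add_comm]
    rwa [mul_one] at this

theorem exists_hasLead_of_ne_zero [WellFoundedLT X] {u : FreeLieAlgebra R X} (hu : u ≠ 0) :
    ∃ (t : FreeMagma X) (c : R), t.IsLyndonTree ∧ c ≠ 0 ∧
      HasLead (toMonoidAlgebra R X u) (FreeMonoid.ofList t.leaves) c := by
  obtain ⟨l, hl, rfl⟩ := (Finsupp.mem_span_image_iff_linearCombination R).1 (mem_span_bracket u)
  have hne : l.support.Nonempty := by
    rw [Finsupp.support_nonempty_iff]
    rintro rfl
    simp at hu
  have hlt : ∀ t ∈ l.support, t.IsLyndonTree := fun t ht => hl ht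
  obtain ⟨t, ht, hmax⟩ :=
    l.support.exists_max_image (fun t => wordKey (FreeMonoid.ofList t.leaves)) hne
  have hcoeff : ∀ w, (toMonoidAlgebra R X (Finsupp.linearCombination R (bracket R) l)).coeff w =
      ∑ s ∈ l.support, l s * (toMonoidAlgebra R X (bracket R s)).coeff w := by
    intro w
    simp [Finsupp.linearCombination_apply, Finsupp.sum]
  refine ⟨t, l t, hlt t ht, Finsupp.mem_support_iff.1 ht, ?_, fun w hw => ?_⟩
  · rw [hcoeff, Finset.sum_eq_single_of_mem t ht, (hasLead_bracket (hlt t ht)).1, mul_one]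
    intro s hs hst
    by_contra h0
    have := (hasLead_bracket (hlt s hs)).2 _ (right_ne_zero_of_mul h0)
    exact hst ((hlt s hs).eq_of_leaves_eq (hlt t ht)
      (wordKey_injective (le_antisymm (hmax s hs) this)))
  · rw [hcoeff] at hw
    obtain ⟨s, hs, h0⟩ := Finset.exists_ne_zero_of_sum_ne_zero hw
    exact ((hasLead_bracket (hlt s hs)).2 _ (right_ne_zero_of_mul h0)).trans (hmax s hs)

theorem eq_of_hasLead_of_lie_eq_zero [IsDomain R] {u v : FreeLieAlgebra R X} (h : ⁅u, v⁆ = 0)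
    {s t : FreeMagma X} {c d : R} (hs : s.IsLyndonTree) (ht : t.IsLyndonTree)
    (hc : c ≠ 0) (hd : d ≠ 0)
    (hu : HasLead (toMonoidAlgebra R X u) (FreeMonoid.ofList s.leaves) c)
    (hv : HasLead (toMonoidAlgebra R X v) (FreeMonoid.ofList t.leaves) d) :
    s.leaves = t.leaves := by
  have hcomm : toMonoidAlgebra R X u * toMonoidAlgebra R X v =
      toMonoidAlgebra R X v * toMonoidAlgebra R X u := by
    rw [← sub_eq_zero, ← LieRing.of_associative_ring_bracket, ← LieHom.map_lie, h, map_zero]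
  have huv := hu.mul hv
  rw [hcomm] at huv
  exact hs.isLyndon.eq_of_append_comm ht.isLyndon s.leaves_ne_nil t.leaves_ne_nil
    (huv.eq_of_ne_zero (hv.mul hu) (mul_ne_zero hc hd) (mul_ne_zero hd hc))

end FreeLieAlgebra

/-- In a free Lie algebra over an integral domain, if two nonzero elements commute
(`⁅u, v⁆ = 0`) then they are proportional over `R`: `α • u = β • v` for some
nonzero scalars `α, β`. -/
theorem freeLie_commute_proportional {R : Type*} [CommRing R] [IsDomain R] {X : Type*}
    (u v : FreeLieAlgebra R X) (hu : u ≠ 0) (hv : v ≠ 0) (h : ⁅u, v⁆ = 0) :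
    ∃ α β : R, α ≠ 0 ∧ β ≠ 0 ∧ α • u = β • v := by
  obtain ⟨_, _⟩ := exists_wellFoundedLT X
  obtain ⟨s, c, hs, hc, hsc⟩ := FreeLieAlgebra.exists_hasLead_of_ne_zero hu
  obtain ⟨t, d, ht, hd, htd⟩ := FreeLieAlgebra.exists_hasLead_of_ne_zero hv
  have hst := FreeLieAlgebra.eq_of_hasLead_of_lie_eq_zero h hs ht hc hd hsc htd
  refine ⟨d, c, hd, hc, ?_⟩
  by_contra hne
  obtain ⟨z, e, hz, he, hze⟩ := FreeLieAlgebra.exists_hasLead_of_ne_zero (sub_ne_zero.2 hne)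
  have hsz := FreeLieAlgebra.eq_of_hasLead_of_lie_eq_zero (by simp [h]) hs hz hc he hsc hze
  apply he
  rw [← hze.1, ← hsz]
  have htd' := htd.1
  rw [← hst] at htd'
  simp [hsc.1, htd', mul_comm]
end

section
/- Let R be an integral domain, L the free Lie algebra over R on a set X, and u = of(x) the canonical generator of L corresponding to some x ∈ X. Then for any v ∈ L, if ⁅u, v⁆ = 0 then v = α • u for some α ∈ R. -/
namespace FreeLieAlgebra

attribute [local instance] LieRing.ofAssociativeRing

variable {R : Type*} [CommRing R] {X : Type*}

section Words

variable {Z : Type*}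

/-- Prepending the letter `y`, as an operator on formal sums of words. -/
noncomputable def consOp (R : Type*) [CommRing R] {Y : Type*} (y : Y) :
    Module.End R (List Y →₀ R) :=
  Finsupp.lmapDomain R R (List.cons y)

@[simp]
theorem consOp_single {Y : Type*} (y : Y) (l : List Y) (r : R) :
    consOp R y (Finsupp.single l r) = Finsupp.single (y :: l) r := by
  simp [consOp]

theorem consOp_apply_nil {Y : Type*} (y : Y) (m : List Y →₀ R) : consOp R y m [] = 0 := by
  rw [consOp, Finsupp.lmapDomain_apply]
  exact Finsupp.mapDomain_of_notMem_range _ _ (by simp)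

theorem consOp_apply_cons {Y : Type*} [DecidableEq Y] (y y' : Y) (l : List Y) (m : List Y →₀ R) :
    consOp R y m (y' :: l) = if y = y' then m l else 0 := by
  rw [consOp, Finsupp.lmapDomain_apply]
  split_ifs with h
  · subst h
    exact Finsupp.mapDomain_apply List.cons_injective _ _
  · exact Finsupp.mapDomain_of_notMem_range _ _ (by simp [h])

/-- The sum of all words obtained from a word in `ℕ × Z` by raising the index of one letter. -/
noncomputable def shiftWord (R : Type*) [CommRing R] {Z : Type*} :
    List (ℕ × Z) → (List (ℕ × Z) →₀ R)
  | [] => 0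
  | y :: l => Finsupp.single ((y.1 + 1, y.2) :: l) 1 + consOp R y (shiftWord R l)

/-- The derivation `(n, z) ↦ (n + 1, z)` on formal sums of words in `ℕ × Z`. -/
noncomputable def shiftOp (R : Type*) [CommRing R] (Z : Type*) :
    Module.End R (List (ℕ × Z) →₀ R) :=
  Finsupp.linearCombination R (shiftWord R)

theorem shiftOp_nil (r : R) : shiftOp R Z (Finsupp.single [] r) = 0 := by
  simp [shiftOp, shiftWord]

theorem shiftOp_consOp (y : ℕ × Z) (m : List (ℕ × Z) →₀ R) :
    shiftOp R Z (consOp R y m) = consOp R (y.1 + 1, y.2) m + consOp R y (shiftOp R Z m) := by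
  induction m using Finsupp.induction_linear with
  | zero => simp
  | add f g hf hg => simp only [map_add, hf, hg]; abel
  | single l r => simp [shiftOp, shiftWord]

theorem shiftOp_mul_consOp_sub (y : ℕ × Z) :
    shiftOp R Z * consOp R y - consOp R y * shiftOp R Z = consOp R (y.1 + 1, y.2) := by
  refine LinearMap.ext fun m => ?_
  simp [shiftOp_consOp]

/-- The part of a formal sum of words starting with a given letter, with that letter removed. -/
noncomputable def tailOp (R : Type*) [CommRing R] {Y : Type*} (y : Y) :
    Module.End R (List Y →₀ R) :=
  Finsupp.lcomapDomain (List.cons y) List.cons_injective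

theorem tailOp_apply {Y : Type*} (y : Y) (m : List Y →₀ R) (l : List Y) :
    tailOp R y m l = m (y :: l) := rfl

theorem tailOp_shiftOp_succ (n : ℕ) (z : Z) (m : List (ℕ × Z) →₀ R) :
    tailOp R (n + 1, z) (shiftOp R Z m) =
      tailOp R (n, z) m + shiftOp R Z (tailOp R (n + 1, z) m) := by
  classical
  induction m using Finsupp.induction_linear with
  | zero => simp
  | add f g hf hg => simp only [map_add, hf, hg]; abel
  | single l r =>
    have tail_cons : ∀ (y y' : ℕ × Z) (m : List (ℕ × Z) →₀ R),
        tailOp R y (consOp R y' m) = if y' = y then m else 0 := by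
      intro y y' m
      ext l
      rw [tailOp_apply, consOp_apply_cons]
      split_ifs <;> rfl
    cases l with
    | nil =>
      have : ∀ y : ℕ × Z, tailOp R y (Finsupp.single [] r) = 0 := by
        intro y; ext l; simp [tailOp_apply]
      simp [shiftOp_nil, this]
    | cons y l =>
      rw [← consOp_single, shiftOp_consOp, map_add, tail_cons, tail_cons, tail_cons, tail_cons]
      obtain ⟨k, z'⟩ := y
      simp only [Prod.mk.injEq, add_left_inj]
      congr 1
      split_ifs <;> simp

theorem eq_zero_of_shiftOp_eq_zero {m : List (ℕ × Z) →₀ R} (h : shiftOp R Z m = 0)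
    (h0 : m [] = 0) : m = 0 := by
  have step : ∀ n z, tailOp R (n + 1, z) m = 0 → tailOp R (n, z) m = 0 := by
    intro n z hn
    have := tailOp_shiftOp_succ n z m
    rw [h, hn] at this
    simpa using this.symm
  have large : ∃ N, ∀ n z, N ≤ n → tailOp R (n, z) m = 0 := by
    refine ⟨m.support.sup (fun l => (l.head?.elim 0 Prod.fst)) + 1, fun n z hn => ?_⟩
    ext l
    by_contra hne
    have hmem : ((n, z) :: l) ∈ m.support := Finsupp.mem_support_iff.2 hne
    have := Finset.le_sup (f := fun l : List (ℕ × Z) => l.head?.elim 0 Prod.fst) hmem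
    simp only [List.head?_cons, Option.elim_some] at this
    omega
  obtain ⟨N, hN⟩ := large
  have all : ∀ n z, tailOp R (n, z) m = 0 := fun n z => by
    have : ∀ k, tailOp R (n + k, z) m = 0 → tailOp R (n, z) m = 0 := by
      intro k
      induction k with
      | zero => exact id
      | succ k ih => exact fun hk => ih (step _ _ hk)
    exact this N (hN _ _ (by omega))
  ext l
  cases l with
  | nil => exact h0
  | cons y l => exact DFunLike.congr_fun (all y.1 y.2) l

/-- The left regular representation of the free algebra on formal sums of words. -/
noncomputable def wordRep (R : Type*) [CommRing R] (Y : Type*) :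
    FreeAlgebra R Y →ₐ[R] Module.End R (List Y →₀ R) :=
  FreeAlgebra.lift R (consOp R)

/-- Evaluation of formal sums of words in the free algebra. -/
noncomputable def wordEval (R : Type*) [CommRing R] (Y : Type*) :
    (List Y →₀ R) →ₗ[R] FreeAlgebra R Y :=
  Finsupp.linearCombination R fun l => (l.map (FreeAlgebra.ι R)).prod

theorem wordEval_wordRep {Y : Type*} (f : FreeAlgebra R Y) (m : List Y →₀ R) :
    wordEval R Y (wordRep R Y f m) = f * wordEval R Y m := by
  induction f using FreeAlgebra.induction generalizing m with
  | grade0 r => simp [Algebra.smul_def]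
  | grade1 y =>
    induction m using Finsupp.induction_linear with
    | zero => simp
    | add f g hf hg => simp only [map_add, hf, hg, mul_add]
    | single l r => simp [wordEval, wordRep]
  | mul a b ha hb => simp [ha, hb, mul_assoc]
  | add a b ha hb => simp [ha, hb, add_mul]

theorem eq_zero_of_wordRep_nil {Y : Type*} {f : FreeAlgebra R Y}
    (h : wordRep R Y f (Finsupp.single [] 1) = 0) : f = 0 := by
  have := wordEval_wordRep f (Finsupp.single [] 1)
  rw [h] at this
  simpa [wordEval] using this.symm

end Words

@[elab_as_elim]
theorem induction_lie {p : FreeLieAlgebra R X → Prop} (of : ∀ x, p (FreeLieAlgebra.of R x))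
    (zero : p 0) (add : ∀ a b, p a → p b → p (a + b)) (smul : ∀ (r : R) a, p a → p (r • a))
    (lie : ∀ a b, p a → p b → p ⁅a, b⁆) (v : FreeLieAlgebra R X) : p v := by
  let K : LieSubalgebra R (FreeLieAlgebra R X) :=
    { carrier := {v | p v}
      zero_mem' := zero
      add_mem' := add _ _
      smul_mem' := smul
      lie_mem' := lie _ _ }
  let g : FreeLieAlgebra R X →ₗ⁅R⁆ K := lift R fun x => ⟨FreeLieAlgebra.of R x, of x⟩
  have hg : K.incl.comp g = LieHom.id := by
    ext x
    simp [g]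
  have hmem : p (g v : FreeLieAlgebra R X) := (g v).2
  rwa [show (g v : FreeLieAlgebra R X) = v from LieHom.congr_fun hg v] at hmem

section Monomials

/-- `IsMonomial S n w` says that `w` is a bracketing of `n` free generators taken from `S`. -/
inductive IsMonomial (S : Set X) : ℕ → FreeLieAlgebra R X → Prop
  | of {x : X} (hx : x ∈ S) : IsMonomial S 1 (FreeLieAlgebra.of R x)
  | lie {i j : ℕ} {u v : FreeLieAlgebra R X} (hu : IsMonomial S i u) (hv : IsMonomial S j v) :
      IsMonomial S (i + j) ⁅u, v⁆

theorem IsMonomial.pos {S : Set X} {n : ℕ} {w : FreeLieAlgebra R X} (h : IsMonomial S n w) :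
    0 < n := by
  induction h with
  | of => exact one_pos
  | lie _ _ hu _ => omega

theorem IsMonomial.mono {S T : Set X} (hST : S ⊆ T) {n : ℕ} {w : FreeLieAlgebra R X}
    (h : IsMonomial S n w) : IsMonomial T n w := by
  induction h with
  | of hx => exact .of (hST hx)
  | lie _ _ hu hv => exact .lie hu hv

theorem IsMonomial.exists_finite {S : Set X} {n : ℕ} {w : FreeLieAlgebra R X}
    (h : IsMonomial S n w) : ∃ T : Set X, T.Finite ∧ IsMonomial T n w := by
  induction h with
  | @of x _ => exact ⟨{x}, Set.finite_singleton x, .of rfl⟩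
  | lie _ _ hu hv =>
    obtain ⟨T, hT, hu⟩ := hu
    obtain ⟨T', hT', hv⟩ := hv
    exact ⟨T ∪ T', hT.union hT',
      .lie (hu.mono Set.subset_union_left) (hv.mono Set.subset_union_right)⟩

theorem not_isMonomial_empty (n : ℕ) (w : FreeLieAlgebra R X) : ¬ IsMonomial ∅ n w := by
  intro h
  induction h with
  | of hx => exact hx
  | lie _ _ hu _ => exact hu

/-- The span of all monomials of degree less than `n` and the monomials of degree `n` whose
letters lie in `S`. -/
noncomputable def filt (R : Type*) [CommRing R] {X : Type*} (n : ℕ) (S : Set X) :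
    Submodule R (FreeLieAlgebra R X) :=
  Submodule.span R {w | (∃ k < n, IsMonomial Set.univ k w) ∨ IsMonomial S n w}

theorem IsMonomial.mem_filt {S : Set X} {n : ℕ} {w : FreeLieAlgebra R X}
    (h : IsMonomial S n w) : w ∈ filt R n S :=
  Submodule.subset_span (Or.inr h)

theorem filt_mono {n : ℕ} {S T : Set X} (hST : S ⊆ T) : filt R n S ≤ filt R n T :=
  Submodule.span_mono fun _ hw => hw.imp_right (·.mono hST)

theorem filt_le_of_lt {m n : ℕ} (hmn : m < n) (S T : Set X) : filt R m S ≤ filt R n T := by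
  refine Submodule.span_mono fun w hw => Or.inl ?_
  rcases hw with ⟨k, hk, hw⟩ | hw
  · exact ⟨k, hk.trans hmn, hw⟩
  · exact ⟨m, hmn, hw.mono (Set.subset_univ _)⟩

theorem filt_le_of_le {m n : ℕ} (hmn : m ≤ n) (S : Set X) : filt R m S ≤ filt R n S := by
  rcases hmn.eq_or_lt with rfl | h
  · exact le_rfl
  · exact filt_le_of_lt h _ _

theorem lie_mem_filt {i j : ℕ} {S : Set X} {u v : FreeLieAlgebra R X}
    (hu : u ∈ filt R i S) (hv : v ∈ filt R j S) : ⁅u, v⁆ ∈ filt R (i + j) S := by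
  induction hu using Submodule.span_induction with
  | zero => simp
  | add a b _ _ ha hb => rw [add_lie]; exact add_mem ha hb
  | smul r a _ ha => rw [smul_lie]; exact Submodule.smul_mem _ _ ha
  | mem u hu =>
    induction hv using Submodule.span_induction with
    | zero => simp
    | add a b _ _ ha hb => rw [lie_add]; exact add_mem ha hb
    | smul r a _ ha => rw [lie_smul]; exact Submodule.smul_mem _ _ ha
    | mem v hv =>
      apply Submodule.subset_span
      rcases hu with ⟨k, hk, hu⟩ | hu <;> rcases hv with ⟨l, hl, hv⟩ | hv
      · exact Or.inl ⟨k + l, by omega, .lie hu hv⟩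
      · exact Or.inl ⟨k + j, by omega, .lie hu (hv.mono (Set.subset_univ _))⟩
      · exact Or.inl ⟨i + l, by omega, .lie (hu.mono (Set.subset_univ _)) hv⟩
      · exact Or.inr (.lie hu hv)

theorem exists_mem_filt (v : FreeLieAlgebra R X) : ∃ n, v ∈ filt R n (Set.univ : Set X) := by
  induction v using induction_lie with
  | of x => exact ⟨1, (IsMonomial.of (Set.mem_univ x)).mem_filt⟩
  | zero => exact ⟨0, zero_mem _⟩
  | add a b ha hb =>
    obtain ⟨m, ha⟩ := ha
    obtain ⟨n, hb⟩ := hb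
    exact ⟨max m n, add_mem (filt_le_of_le (le_max_left _ _) _ ha)
      (filt_le_of_le (le_max_right _ _) _ hb)⟩
  | smul r a ha =>
    obtain ⟨m, ha⟩ := ha
    exact ⟨m, Submodule.smul_mem _ _ ha⟩
  | lie a b ha hb =>
    obtain ⟨m, ha⟩ := ha
    obtain ⟨n, hb⟩ := hb
    exact ⟨m + n, lie_mem_filt ha hb⟩

theorem exists_finite_mem_filt {n : ℕ} {v : FreeLieAlgebra R X}
    (hv : v ∈ filt R (n + 1) (∅ : Set X)) : ∃ S : Set X, S.Finite ∧ v ∈ filt R n S := by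
  induction hv using Submodule.span_induction with
  | zero => exact ⟨∅, Set.finite_empty, zero_mem _⟩
  | add a b _ _ ha hb =>
    obtain ⟨S, hS, ha⟩ := ha
    obtain ⟨T, hT, hb⟩ := hb
    exact ⟨S ∪ T, hS.union hT, add_mem (filt_mono Set.subset_union_left ha)
      (filt_mono Set.subset_union_right hb)⟩
  | smul r a _ ha =>
    obtain ⟨S, hS, ha⟩ := ha
    exact ⟨S, hS, Submodule.smul_mem _ _ ha⟩
  | mem w hw =>
    rcases hw with ⟨k, hk, hw⟩ | hw
    · obtain ⟨S, hS, hw⟩ := hw.exists_finite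
      exact ⟨S, hS, filt_le_of_le (by omega) _ hw.mem_filt⟩
    · exact absurd hw (not_isMonomial_empty _ _)

end Monomials

section Elimination

variable (R) in
/-- The homomorphism sending the letter `(n, z)` to `(ad x) ^ n z`. -/
noncomputable def elim (x : X) :
    FreeLieAlgebra R (ℕ × {z : X // z ≠ x}) →ₗ⁅R⁆ FreeLieAlgebra R X :=
  lift R fun y => ((LieAlgebra.ad R _ (of R x)) ^ y.1) (of R y.2.1)

theorem elim_of_succ (x : X) (n : ℕ) (z : {z : X // z ≠ x}) :
    elim R x (of R (n + 1, z)) = ⁅of R x, elim R x (of R (n, z))⁆ := by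
  simp [elim, pow_succ']

theorem exists_elim_eq_lie (x : X) {n : ℕ} {w : FreeLieAlgebra R (ℕ × {z : X // z ≠ x})}
    (hw : w ∈ filt R n Set.univ) :
    ∃ w' ∈ filt R n Set.univ, elim R x w' = ⁅of R x, elim R x w⁆ := by
  have mono : ∀ {k : ℕ} {w : FreeLieAlgebra R (ℕ × {z : X // z ≠ x})},
      IsMonomial Set.univ k w →
        ∃ w' ∈ filt R k Set.univ, elim R x w' = ⁅of R x, elim R x w⁆ := by
    intro k w hw
    induction hw with
    | @of y _ =>
      exact ⟨of R (y.1 + 1, y.2), (IsMonomial.of (Set.mem_univ _)).mem_filt, elim_of_succ _ _ _⟩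
    | @lie i j u v hu hv hu' hv' =>
      obtain ⟨u', hu'm, hu'⟩ := hu'
      obtain ⟨v', hv'm, hv'⟩ := hv'
      refine ⟨⁅u', v⁆ + ⁅u, v'⁆,
        add_mem (lie_mem_filt hu'm hv.mem_filt) (lie_mem_filt hu.mem_filt hv'm), ?_⟩
      rw [map_add, LieHom.map_lie, LieHom.map_lie, LieHom.map_lie, hu', hv', ← leibniz_lie]
  induction hw using Submodule.span_induction with
  | zero => exact ⟨0, zero_mem _, by simp⟩
  | add a b _ _ ha hb =>
    obtain ⟨a', ham, ha⟩ := ha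
    obtain ⟨b', hbm, hb⟩ := hb
    exact ⟨a' + b', add_mem ham hbm, by simp [ha, hb]⟩
  | smul r a _ ha =>
    obtain ⟨a', ham, ha⟩ := ha
    exact ⟨r • a', Submodule.smul_mem _ _ ham, by simp [ha]⟩
  | mem w hw =>
    rcases hw with ⟨k, hk, hw⟩ | hw
    · obtain ⟨w', hm, h⟩ := mono hw
      exact ⟨w', filt_le_of_lt hk _ _ hm, h⟩
    · exact mono hw

/-- The letters `(0, z)` with `z ∈ S`. -/
def elimLetters (x : X) (S : Set X) : Set (ℕ × {z : X // z ≠ x}) :=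
  {y | y.1 = 0 ∧ y.2.1 ∈ S}

theorem exists_eq_smul_add_elim_of_isMonomial (x : X) {S : Set X} {n : ℕ} {w : FreeLieAlgebra R X}
    (hw : IsMonomial S n w) :
    ∃ a : R, ∃ w' ∈ filt R n (elimLetters x S), w = a • of R x + elim R x w' := by
  induction hw with
  | @of z hz =>
    by_cases hzx : z = x
    · exact ⟨1, 0, zero_mem _, by simp [hzx]⟩
    · exact ⟨0, of R (0, ⟨z, hzx⟩),
        (IsMonomial.of (show (0, ⟨z, hzx⟩) ∈ elimLetters x S from ⟨rfl, hz⟩)).mem_filt,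
        by simp [elim]⟩
  | @lie i j u v hu hv hu' hv' =>
    obtain ⟨a, u', hum, hue⟩ := hu'
    obtain ⟨b, v', hvm, hve⟩ := hv'
    obtain ⟨u'', hum', hue'⟩ := exists_elim_eq_lie x (filt_mono (Set.subset_univ _) hum)
    obtain ⟨v'', hvm', hve'⟩ := exists_elim_eq_lie x (filt_mono (Set.subset_univ _) hvm)
    have hi := hu.pos
    have hj := hv.pos
    refine ⟨0, a • v'' - b • u'' + ⁅u', v'⁆, add_mem (sub_mem
      (Submodule.smul_mem _ _ (filt_le_of_lt (by omega) _ _ hvm'))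
      (Submodule.smul_mem _ _ (filt_le_of_lt (by omega) _ _ hum'))) (lie_mem_filt hum hvm), ?_⟩
    rw [hue, hve, map_add, map_sub, map_smul, map_smul, LieHom.map_lie, hue', hve']
    simp only [add_lie, lie_add, smul_lie, lie_smul, lie_self, smul_zero, zero_smul]
    rw [← lie_skew (of R x) (elim R x u'), smul_neg]
    module

theorem exists_eq_smul_add_elim (x : X) {S : Set X} {n : ℕ} {w : FreeLieAlgebra R X}
    (hw : w ∈ filt R n S) :
    ∃ a : R, ∃ w' ∈ filt R n (elimLetters x S), w = a • of R x + elim R x w' := by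
  induction hw using Submodule.span_induction with
  | zero => exact ⟨0, 0, zero_mem _, by simp⟩
  | add u v _ _ hu hv =>
    obtain ⟨a, u', hum, rfl⟩ := hu
    obtain ⟨b, v', hvm, rfl⟩ := hv
    exact ⟨a + b, u' + v', add_mem hum hvm, by rw [map_add, add_smul]; abel⟩
  | smul r u _ hu =>
    obtain ⟨a, u', hum, rfl⟩ := hu
    exact ⟨r * a, r • u', Submodule.smul_mem _ _ hum, by rw [map_smul, smul_add, mul_smul]⟩
  | mem w hw =>
    rcases hw with ⟨k, hk, hw⟩ | hw
    · obtain ⟨a, w', hm, h⟩ := exists_eq_smul_add_elim_of_isMonomial x hw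
      exact ⟨a, w', filt_le_of_lt hk _ _ hm, h⟩
    · exact exists_eq_smul_add_elim_of_isMonomial x hw

variable (R X) in
/-- The canonical homomorphism from the free Lie algebra to the free associative algebra. -/
noncomputable def toFreeAlgebra : FreeLieAlgebra R X →ₗ⁅R⁆ FreeAlgebra R X :=
  lift R (FreeAlgebra.ι R)

open Classical in
variable (R) in
/-- The representation of the free algebra on formal sums of words in `ℕ × {z // z ≠ x}` in which
`x` acts as the shift derivation and `z ≠ x` as prepending `(0, z)`. -/
noncomputable def elimRep (x : X) :
    FreeAlgebra R X →ₐ[R] Module.End R (List (ℕ × {z : X // z ≠ x}) →₀ R) :=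
  FreeAlgebra.lift R fun z =>
    if h : z = x then shiftOp R {z : X // z ≠ x} else consOp R (0, ⟨z, h⟩)

theorem elimRep_of_self (x : X) :
    elimRep R x (toFreeAlgebra R X (of R x)) = shiftOp R {z : X // z ≠ x} := by
  simp [elimRep, toFreeAlgebra]

theorem toFreeAlgebra_lie (u v : FreeLieAlgebra R X) :
    toFreeAlgebra R X ⁅u, v⁆ =
      toFreeAlgebra R X u * toFreeAlgebra R X v - toFreeAlgebra R X v * toFreeAlgebra R X u :=
  (toFreeAlgebra R X).map_lie u v

theorem elimRep_elim (x : X) (w : FreeLieAlgebra R (ℕ × {z : X // z ≠ x})) :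
    elimRep R x (toFreeAlgebra R X (elim R x w)) =
      wordRep R _ (toFreeAlgebra R _ w) := by
  have gen : ∀ n z, elimRep R x (toFreeAlgebra R X (elim R x (of R (n, z)))) =
      wordRep R _ (toFreeAlgebra R _ (of R (n, z))) := by
    intro n z
    induction n with
    | zero => simp [elim, elimRep, toFreeAlgebra, wordRep, z.2]
    | succ n ih =>
      rw [elim_of_succ, toFreeAlgebra_lie, map_sub, map_mul, map_mul, ih, elimRep_of_self]
      simp [toFreeAlgebra, wordRep, shiftOp_mul_consOp_sub]
  induction w using induction_lie with
  | of y => exact gen y.1 y.2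
  | zero => simp
  | add a b ha hb => simp [ha, hb]
  | smul r a ha => simp [ha]
  | lie a b ha hb =>
    simp only [LieHom.map_lie (elim R x), toFreeAlgebra_lie, map_sub, map_mul, ha, hb]

theorem toFreeAlgebra_eq_zero_of_elim {x : X} {a : R}
    {w : FreeLieAlgebra R (ℕ × {z : X // z ≠ x})}
    (h : toFreeAlgebra R X (a • of R x + elim R x w) = 0) : toFreeAlgebra R _ w = 0 := by
  apply eq_zero_of_wordRep_nil
  have := congrArg (elimRep R x) h
  rw [map_add, map_smul, map_add, map_smul, elimRep_of_self, elimRep_elim] at this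
  simpa [shiftOp_nil] using LinearMap.congr_fun this (Finsupp.single [] 1)

theorem eq_zero_of_smul_ι_eq_zero {x : X} {a : R} (h : a • FreeAlgebra.ι R x = 0) : a = 0 := by
  simpa using congrArg (FreeAlgebra.lift R fun _ => (1 : R)) h

theorem ncard_elimLetters_lt {x : X} {S : Set X} (hS : S.Finite) (hx : x ∈ S) :
    (elimLetters x S).Finite ∧ (elimLetters x S).ncard < S.ncard := by
  have maps : ∀ y ∈ elimLetters x S, y.2.1 ∈ S \ {x} := fun y hy => ⟨hy.2, y.2.2⟩
  have inj : Set.InjOn (fun y : ℕ × {z : X // z ≠ x} => y.2.1) (elimLetters x S) := by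
    rintro ⟨m, y⟩ hy ⟨n, z⟩ hz h
    exact Prod.ext (hy.1.trans hz.1.symm) (Subtype.ext h)
  exact ⟨Set.Finite.of_injOn maps inj hS.sdiff,
    (Set.ncard_le_ncard_of_injOn _ maps inj hS.sdiff).trans_lt
      (Set.ncard_sdiff_singleton_lt_of_mem hx hS)⟩

universe u in
theorem eq_zero_of_toFreeAlgebra_eq_zero (n k : ℕ) : ∀ (X : Type u) (S : Set X), S.Finite →
    S.ncard ≤ k → ∀ w ∈ filt R n S, toFreeAlgebra R X w = 0 → w = 0 := by
  induction n generalizing k with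
  | zero =>
    intro X S _ _ w hw _
    rw [filt, Submodule.span_eq_bot.2, Submodule.mem_bot] at hw
    · exact hw
    · rintro w (⟨k, hk, -⟩ | hw)
      · omega
      · exact absurd hw.pos (lt_irrefl 0)
  | succ n ihn =>
    induction k with
    | zero =>
      intro X S hS hk w hw h
      obtain rfl : S = ∅ := (Set.ncard_eq_zero hS).1 (by omega)
      obtain ⟨T, hT, hw⟩ := exists_finite_mem_filt hw
      exact ihn _ X T hT le_rfl w hw h
    | succ k ihk =>
      intro X S hS hk w hw h
      rcases S.eq_empty_or_nonempty with rfl | ⟨x, hx⟩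
      · exact ihk X ∅ hS (by simp) w hw h
      obtain ⟨a, w', hw', rfl⟩ := exists_eq_smul_add_elim x hw
      obtain ⟨hfin, hlt⟩ := ncard_elimLetters_lt hS hx
      obtain rfl := ihk _ _ hfin (by omega) w' hw' (toFreeAlgebra_eq_zero_of_elim h)
      have : a = 0 := eq_zero_of_smul_ι_eq_zero (x := x) (by simpa [toFreeAlgebra] using h)
      simp [this]

/-- The free Lie algebra embeds into the free associative algebra. -/
theorem toFreeAlgebra_injective : Function.Injective (toFreeAlgebra R X) := by
  refine (injective_iff_map_eq_zero _).2 fun w h => ?_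
  obtain ⟨n, hw⟩ := exists_mem_filt w
  obtain ⟨S, hS, hw⟩ := exists_finite_mem_filt (filt_le_of_lt n.lt_succ_self _ ∅ hw)
  exact eq_zero_of_toFreeAlgebra_eq_zero n _ X S hS le_rfl w hw h

theorem wordRep_toFreeAlgebra_apply_nil {Y : Type*} (w : FreeLieAlgebra R Y) (m : List Y →₀ R) :
    wordRep R Y (toFreeAlgebra R Y w) m [] = 0 := by
  induction w using induction_lie generalizing m with
  | of y => simp [toFreeAlgebra, wordRep, consOp_apply_nil]
  | zero => simp
  | add a b ha hb => simp [ha, hb]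
  | smul r a ha => simp [ha]
  | lie a b ha hb => rw [toFreeAlgebra_lie]; simp [ha, hb]

/-- Over any commutative ring, an element commuting with a free generator is a multiple of it. -/
theorem exists_eq_smul_of_lie_eq_zero {x : X} {v : FreeLieAlgebra R X} (h : ⁅of R x, v⁆ = 0) :
    ∃ a : R, v = a • of R x := by
  obtain ⟨n, hv⟩ := exists_mem_filt v
  obtain ⟨a, w, -, rfl⟩ := exists_eq_smul_add_elim x hv
  refine ⟨a, ?_⟩
  have hlie : ⁅of R x, elim R x w⁆ = 0 := by simpa using h
  have hshift : shiftOp R _ (wordRep R _ (toFreeAlgebra R _ w) (Finsupp.single [] 1)) = 0 := by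
    have hrep := congrArg (fun u => elimRep R x (toFreeAlgebra R X u)) hlie
    simp only [toFreeAlgebra_lie, map_sub, map_mul, elimRep_of_self, elimRep_elim, map_zero]
      at hrep
    simpa [shiftOp_nil] using LinearMap.congr_fun hrep (Finsupp.single [] 1)
  have hw : toFreeAlgebra R _ w = 0 := eq_zero_of_wordRep_nil
    (eq_zero_of_shiftOp_eq_zero hshift (wordRep_toFreeAlgebra_apply_nil w _))
  rw [toFreeAlgebra_injective (hw.trans (map_zero _).symm), map_zero, add_zero]

end Elimination

end FreeLieAlgebra

/-- In a free Lie algebra over an integral domain, the centralizer of a free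
generator `u = of x` consists precisely of the scalar multiples of `u`. -/
theorem freeLie_centralizer_of_generator {R : Type*} [CommRing R] [IsDomain R] {X : Type*}
    (x : X) (v : FreeLieAlgebra R X) (h : ⁅FreeLieAlgebra.of R x, v⁆ = 0) :
    ∃ α : R, v = α • FreeLieAlgebra.of R x := by
  exact FreeLieAlgebra.exists_eq_smul_of_lie_eq_zero h
end

section
/- Let M₁, M₂, N be abelian groups and f : M₁ × M₂ → N a non-degenerate bi-additive map. Suppose the triples of additive endomorphisms (α₁, α₂, σ) and (β₁, β₂, τ) of (M₁, M₂, N) each satisfy the scalar conditions f(α₁ x, y) = f(x, α₂ y) = σ(f(x, y)) and f(β₁ x, y) = f(x, β₂ y) = τ(f(x, y)) for all x ∈ M₁, y ∈ M₂. Then α₁ ∘ β₁ = β₁ ∘ α₁ and α₂ ∘ β₂ = β₂ ∘ α₂ (the ring of scalars of f is commutative). -/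
/-- For a non-degenerate bi-additive map `f : M₁ × M₂ → N`, any two triples of additive
endomorphisms satisfying the scalar conditions commute on `M₁` and on `M₂`; i.e.,
the maximal ring of scalars of `f` is commutative. -/
theorem scalars_commute {M₁ M₂ N : Type*} [AddCommGroup M₁] [AddCommGroup M₂]
    [AddCommGroup N] (f : M₁ →+ M₂ →+ N)
    (hnd₁ : ∀ x : M₁, (∀ y : M₂, f x y = 0) → x = 0)
    (hnd₂ : ∀ y : M₂, (∀ x : M₁, f x y = 0) → y = 0)
    (α₁ : M₁ →+ M₁) (α₂ : M₂ →+ M₂) (σ : N →+ N)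
    (β₁ : M₁ →+ M₁) (β₂ : M₂ →+ M₂) (τ : N →+ N)
    (hα : ∀ (x : M₁) (y : M₂), f (α₁ x) y = σ (f x y) ∧ f x (α₂ y) = σ (f x y))
    (hβ : ∀ (x : M₁) (y : M₂), f (β₁ x) y = τ (f x y) ∧ f x (β₂ y) = τ (f x y)) :
    (∀ x : M₁, α₁ (β₁ x) = β₁ (α₁ x)) ∧ (∀ y : M₂, α₂ (β₂ y) = β₂ (α₂ y)) := by
  have hcomm (x : M₁) (y : M₂) : σ (τ (f x y)) = τ (σ (f x y)) := by
    rw [← (hβ x y).1, ← (hα (β₁ x) y).2, (hβ x (α₂ y)).1, (hα x y).2]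
  refine ⟨fun x => sub_eq_zero.mp (hnd₁ _ fun y => ?_),
    fun y => sub_eq_zero.mp (hnd₂ _ fun x => ?_)⟩
  · rw [map_sub, AddMonoidHom.sub_apply, (hα _ y).1, (hβ x y).1, (hβ _ y).1, (hα x y).1,
      hcomm, sub_self]
  · rw [map_sub, (hα x _).2, (hβ x y).2, (hβ x _).2, (hα x y).2, hcomm, sub_self]
end

section
/- Let R be an integral domain and L the free Lie algebra over R on a set X. For all u, v ∈ L and all nonzero α ∈ R: if ⁅u, v⁆ + α • u = 0, then u = 0. -/
namespace FreeLieAlgebra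

open Filter TensorProduct

attribute [local instance] LieRing.ofAssociativeRing

noncomputable section

/-! ### Monomials and the length filtration -/

section Monomial

variable (R : Type*) [CommRing R] {X : Type*}

/-- The iterated bracket of generators whose shape is a given element of the free magma. -/
def monomial : FreeMagma X → FreeLieAlgebra R X
  | .of x => of R x
  | .mul a b => ⁅monomial a, monomial b⁆

@[simp]
theorem monomial_of (x : X) : monomial R (.of x) = of R x := rfl

@[simp]
theorem monomial_mul (a b : FreeMagma X) :
    monomial R (a * b) = ⁅monomial R a, monomial R b⁆ := rfl

/-- If all brackets of `s` with `t` lie in `w`, the same holds for the linear spans. -/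
theorem lie_mem_span {L : Type*} [LieRing L] [LieAlgebra R L] {s t w : Set L}
    (h : ∀ a ∈ s, ∀ b ∈ t, ⁅a, b⁆ ∈ w) {u v : L}
    (hu : u ∈ Submodule.span R s) (hv : v ∈ Submodule.span R t) :
    ⁅u, v⁆ ∈ Submodule.span R w := by
  induction hu, hv using Submodule.span_induction₂ with
  | mem_mem a b ha hb => exact Submodule.subset_span (h a ha b hb)
  | zero_left => simp
  | zero_right => simp
  | add_left a b c _ _ _ h₁ h₂ => rw [add_lie]; exact add_mem h₁ h₂
  | add_right a b c _ _ _ h₁ h₂ => rw [lie_add]; exact add_mem h₁ h₂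
  | smul_left r a b _ _ h₁ => rw [smul_lie]; exact Submodule.smul_mem _ _ h₁
  | smul_right r a b _ _ h₁ => rw [lie_smul]; exact Submodule.smul_mem _ _ h₁

variable (X) in
theorem span_range_monomial : Submodule.span R (Set.range (monomial R (X := X))) = ⊤ := by
  let S : LieSubalgebra R (FreeLieAlgebra R X) :=
    { Submodule.span R (Set.range (monomial R (X := X))) with
      lie_mem' := fun hu hv ↦ lie_mem_span R
        (by rintro _ ⟨a, rfl⟩ _ ⟨b, rfl⟩; exact ⟨a * b, rfl⟩) hu hv }
  let f : FreeLieAlgebra R X →ₗ⁅R⁆ S :=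
    lift R fun x ↦ ⟨of R x, Submodule.subset_span ⟨.of x, rfl⟩⟩
  have hf : S.incl.comp f = LieHom.id := by
    ext x
    simp [f]
  refine eq_top_iff.2 fun u _ ↦ ?_
  have hu : ((f u : S) : FreeLieAlgebra R X) = u := DFunLike.congr_fun hf u
  exact hu ▸ (f u).2

@[elab_as_elim]
theorem monomial_induction {p : FreeLieAlgebra R X → Prop} (u : FreeLieAlgebra R X)
    (monomial : ∀ m, p (monomial R m)) (zero : p 0) (add : ∀ a b, p a → p b → p (a + b))
    (smul : ∀ (r : R) a, p a → p (r • a)) : p u := by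
  have hu : u ∈ Submodule.span R (Set.range (FreeLieAlgebra.monomial R (X := X))) := by
    simp [span_range_monomial]
  induction hu using Submodule.span_induction with
  | mem a ha => obtain ⟨m, rfl⟩ := ha; exact monomial m
  | zero => exact zero
  | add a b _ _ ha hb => exact add a b ha hb
  | smul r a _ ha => exact smul r a ha

variable (X) in
/-- The span of the monomials of length at most `n`. -/
def lengthLE (n : ℕ) : Submodule R (FreeLieAlgebra R X) :=
  Submodule.span R (monomial R '' {m | m.length ≤ n})

theorem lengthLE_mono {n k : ℕ} (h : n ≤ k) : lengthLE R X n ≤ lengthLE R X k :=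
  Submodule.span_mono (Set.image_mono fun _ hm ↦ le_trans hm h)

theorem monomial_mem_lengthLE {m : FreeMagma X} {n : ℕ} (h : m.length ≤ n) :
    monomial R m ∈ lengthLE R X n :=
  Submodule.subset_span ⟨m, h, rfl⟩

theorem lengthLE_zero : lengthLE R X 0 = ⊥ := by
  rw [lengthLE, Submodule.span_eq_bot]
  rintro _ ⟨m, hm, rfl⟩
  exact absurd m.length_pos (by simpa using hm)

theorem lie_mem_lengthLE {n k : ℕ} {u v : FreeLieAlgebra R X}
    (hu : u ∈ lengthLE R X n) (hv : v ∈ lengthLE R X k) : ⁅u, v⁆ ∈ lengthLE R X (n + k) := by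
  refine lie_mem_span R ?_ hu hv
  rintro _ ⟨a, ha, rfl⟩ _ ⟨b, hb, rfl⟩
  exact ⟨a * b, Nat.add_le_add ha hb, rfl⟩

theorem exists_mem_lengthLE (u : FreeLieAlgebra R X) : ∃ n, u ∈ lengthLE R X n := by
  induction u using monomial_induction with
  | monomial m => exact ⟨m.length, monomial_mem_lengthLE R le_rfl⟩
  | zero => exact ⟨0, zero_mem _⟩
  | add a b ha hb =>
    obtain ⟨n, hn⟩ := ha
    obtain ⟨k, hk⟩ := hb
    exact ⟨max n k, add_mem (lengthLE_mono R (le_max_left n k) hn)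
      (lengthLE_mono R (le_max_right n k) hk)⟩
  | smul r a ha =>
    obtain ⟨n, hn⟩ := ha
    exact ⟨n, Submodule.smul_mem _ r hn⟩

end Monomial

/-! ### Derivations of a free Lie algebra -/

/-- The square-zero extension `L ⊕ ε L` of a Lie algebra by its adjoint module. -/
@[ext]
structure DualLie (L : Type*) where
  /-- The base component. -/
  fst : L
  /-- The coefficient of `ε`. -/
  snd : L

namespace DualLie

variable {R L : Type*} [CommRing R] [LieRing L] [LieAlgebra R L]

/-- The underlying type of the square-zero extension is a product. -/
def equivProd : DualLie L ≃ L × L where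
  toFun a := (a.fst, a.snd)
  invFun a := ⟨a.1, a.2⟩

instance : AddCommGroup (DualLie L) := equivProd.addCommGroup

instance : Module R (DualLie L) := equivProd.module R

instance : Bracket (DualLie L) (DualLie L) where
  bracket a b := ⟨⁅a.fst, b.fst⁆, ⁅a.fst, b.snd⁆ + ⁅a.snd, b.fst⁆⟩

@[simp] theorem zero_fst : (0 : DualLie L).fst = 0 := rfl
@[simp] theorem zero_snd : (0 : DualLie L).snd = 0 := rfl
@[simp] theorem add_fst (a b : DualLie L) : (a + b).fst = a.fst + b.fst := rfl
@[simp] theorem add_snd (a b : DualLie L) : (a + b).snd = a.snd + b.snd := rfl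
@[simp] theorem smul_fst (r : R) (a : DualLie L) : (r • a).fst = r • a.fst := rfl
@[simp] theorem smul_snd (r : R) (a : DualLie L) : (r • a).snd = r • a.snd := rfl
@[simp] theorem lie_fst (a b : DualLie L) : ⁅a, b⁆.fst = ⁅a.fst, b.fst⁆ := rfl
@[simp] theorem lie_snd (a b : DualLie L) :
    ⁅a, b⁆.snd = ⁅a.fst, b.snd⁆ + ⁅a.snd, b.fst⁆ := rfl

instance : LieRing (DualLie L) where
  add_lie a b c := by ext <;> simp; abel
  lie_add a b c := by ext <;> simp; abel
  lie_self a := by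
    ext
    · simp
    · rw [lie_snd, ← lie_skew a.fst, neg_add_cancel, zero_snd]
  leibniz_lie a b c := by
    ext
    · simp
    · simp only [lie_snd, lie_fst, lie_add, add_lie, add_snd]
      rw [leibniz_lie a.fst b.fst, leibniz_lie a.fst b.snd, leibniz_lie a.snd b.fst]
      abel

instance : LieAlgebra R (DualLie L) where
  lie_smul r a b := by ext <;> simp

/-- The projection of the square-zero extension to its base. -/
def fstHom : DualLie L →ₗ⁅R⁆ L where
  toFun := fst
  map_add' _ _ := rfl
  map_smul' _ _ := rfl
  map_lie' := rfl

end DualLie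

section Derivation

variable {R : Type*} [CommRing R] {X : Type*} (f : X → FreeLieAlgebra R X)

/-- The homomorphism `u ↦ u + ε D u` encoding a derivation with prescribed values on generators. -/
def dualHom : FreeLieAlgebra R X →ₗ⁅R⁆ DualLie (FreeLieAlgebra R X) :=
  lift R fun x ↦ ⟨of R x, f x⟩

theorem dualHom_fst (u : FreeLieAlgebra R X) : (dualHom f u).fst = u := by
  have h : (DualLie.fstHom (R := R)).comp (dualHom f) = LieHom.id := by
    ext x
    simp only [dualHom, LieHom.comp_apply, lift_of_apply]
    rfl
  exact DFunLike.congr_fun h u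

/-- The derivation of a free Lie algebra with prescribed values on the generators. -/
def derivation : LieDerivation R (FreeLieAlgebra R X) (FreeLieAlgebra R X) where
  toFun u := (dualHom f u).snd
  map_add' u v := by simp
  map_smul' r u := by simp
  leibniz' u v := by
    change (dualHom f ⁅u, v⁆).snd = ⁅u, (dualHom f v).snd⁆ - ⁅v, (dualHom f u).snd⁆
    rw [LieHom.map_lie, DualLie.lie_snd, dualHom_fst, dualHom_fst, ← lie_skew v, sub_neg_eq_add]

@[simp]
theorem derivation_of (x : X) : derivation f (of R x) = f x := by
  change (dualHom f (of R x)).snd = f x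
  simp [dualHom]

theorem derivation_lie (u v : FreeLieAlgebra R X) :
    derivation f ⁅u, v⁆ = ⁅u, derivation f v⁆ + ⁅derivation f u, v⁆ := by
  rw [LieDerivation.apply_lie_eq_sub, ← lie_skew v, sub_neg_eq_add]

theorem derivation_mem_lengthLE (hf : ∀ x, f x ∈ lengthLE R X 1) {n : ℕ}
    {u : FreeLieAlgebra R X} (hu : u ∈ lengthLE R X n) : derivation f u ∈ lengthLE R X n := by
  have key (m : FreeMagma X) : derivation f (monomial R m) ∈ lengthLE R X m.length := by
    induction m using FreeMagma.recOnMul with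
    | ih1 x => simpa using hf x
    | ih2 a b ha hb =>
      rw [monomial_mul, derivation_lie]
      exact add_mem (lie_mem_lengthLE R (monomial_mem_lengthLE R le_rfl) hb)
        (lie_mem_lengthLE R ha (monomial_mem_lengthLE R le_rfl))
  have : lengthLE R X n ≤ (lengthLE R X n).comap (derivation f).toLinearMap := by
    refine Submodule.span_le.2 ?_
    rintro _ ⟨m, hm, rfl⟩
    exact lengthLE_mono R hm (key m)
  exact this hu

end Derivation

/-! ### Elimination of a generator -/

section Elimination

variable (R : Type*) [CommRing R] {X : Type*}

variable (X) in
/-- The derivation shifting the generators `(n, y)` to `(n + 1, y)`. -/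
def shift : LieDerivation R (FreeLieAlgebra R (ℕ × X)) (FreeLieAlgebra R (ℕ × X)) :=
  derivation fun p ↦ of R (p.1 + 1, p.2)

variable (X) in
/-- The action of the one-dimensional Lie algebra through the shift derivation. -/
def shiftAction : R →ₗ⁅R⁆ LieDerivation R (FreeLieAlgebra R (ℕ × X)) (FreeLieAlgebra R (ℕ × X)) :=
  { LinearMap.toSpanSingleton R _ (shift R X) with
    map_lie' := by
      intro a b
      simp [LieRing.of_associative_ring_bracket, mul_comm] }

theorem shiftAction_apply (r : R) (u : FreeLieAlgebra R (ℕ × X)) :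
    shiftAction R X r u = r • shift R X u := rfl

open scoped Classical in
/-- Lazard elimination of the generator `x`: it is sent to the one-dimensional factor of a
semidirect sum, every other generator `y` to the generator `(0, y)`. -/
def eliminate (x : X) :
    FreeLieAlgebra R X →ₗ⁅R⁆
      LieAlgebra.SemiDirectSum (FreeLieAlgebra R (ℕ × X)) R (shiftAction R X) :=
  lift R fun y ↦ if y = x then ⟨0, 1⟩ else ⟨of R (0, y), 0⟩

/-- The homomorphism sending `(n, y)` to `(ad x)ⁿ y`. -/
def adPow (x : X) : FreeLieAlgebra R (ℕ × X) →ₗ⁅R⁆ FreeLieAlgebra R X :=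
  lift R fun p ↦ (fun w ↦ ⁅of R x, w⁆)^[p.1] (of R p.2)

theorem adPow_shift (x : X) (u : FreeLieAlgebra R (ℕ × X)) :
    adPow R x (shift R X u) = ⁅of R x, adPow R x u⁆ := by
  induction u using monomial_induction with
  | monomial m =>
    induction m using FreeMagma.recOnMul with
    | ih1 p => simp [shift, adPow, Function.iterate_succ_apply']
    | ih2 a b ha hb =>
      rw [shift] at ha hb ⊢
      rw [monomial_mul, derivation_lie, map_add, LieHom.map_lie, LieHom.map_lie, ha, hb,
        LieHom.map_lie, leibniz_lie (of R x), add_comm]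
  | zero => simp
  | add a b ha hb => simp [ha, hb]
  | smul r a ha => simp [ha]

/-- The left inverse of elimination. -/
def uneliminate (x : X) :
    LieAlgebra.SemiDirectSum (FreeLieAlgebra R (ℕ × X)) R (shiftAction R X) →ₗ⁅R⁆
      FreeLieAlgebra R X where
  toFun a := adPow R x a.left + a.right • of R x
  map_add' a b := by simp [add_smul]; abel
  map_smul' r a := by simp [mul_smul]
  map_lie' := by
    intro a b
    simp only [LieAlgebra.SemiDirectSum.lie_eq_mk, shiftAction_apply, map_add, map_sub, map_smul,
      adPow_shift, LieHom.map_lie, lie_add, add_lie, lie_smul, smul_lie, lie_self, smul_zero,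
      LieRing.of_associative_ring_bracket, mul_comm, sub_self, zero_smul, add_zero]
    rw [← lie_skew (adPow R x a.left) (of R x), smul_neg]
    abel

theorem eliminate_injective (x : X) : Function.Injective (eliminate R x) := by
  have h : (uneliminate R x).comp (eliminate R x) = LieHom.id := by
    ext y
    by_cases hy : y = x <;> simp [uneliminate, eliminate, adPow, hy]
  exact Function.LeftInverse.injective (g := uneliminate R x) fun u ↦ DFunLike.congr_fun h u

open scoped Classical in
/-- The number of leaves different from `x`. -/
def lengthAway (x : X) : FreeMagma X → ℕ
  | .of y => if y = x then 0 else 1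
  | .mul a b => lengthAway x a + lengthAway x b

theorem lengthAway_of_self (x : X) : lengthAway x (.of x) = 0 := by simp [lengthAway]

theorem lengthAway_of_ne {x y : X} (h : y ≠ x) : lengthAway x (.of y) = 1 := by
  simp [lengthAway, h]

theorem lengthAway_mul (x : X) (a b : FreeMagma X) :
    lengthAway x (a * b) = lengthAway x a + lengthAway x b := rfl

theorem length_mul (a b : FreeMagma X) : (a * b).length = a.length + b.length := rfl

theorem lengthAway_le (x : X) (m : FreeMagma X) : lengthAway x m ≤ m.length := by
  induction m using FreeMagma.recOnMul with
  | ih1 y =>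
    by_cases hy : y = x
    · simp [hy, lengthAway_of_self]
    · simp [lengthAway_of_ne hy, FreeMagma.length]
  | ih2 a b ha hb => exact Nat.add_le_add ha hb

theorem eliminate_monomial_left_mem (x : X) (m : FreeMagma X) :
    (eliminate R x (monomial R m)).left ∈ lengthLE R (ℕ × X) (lengthAway x m) := by
  induction m using FreeMagma.recOnMul with
  | ih1 y =>
    by_cases hy : y = x
    · simp [eliminate, hy]
    · simpa [eliminate, hy, lengthAway_of_ne hy] using
        monomial_mem_lengthLE R (m := .of ((0, y) : ℕ × X)) le_rfl
  | ih2 a b ha hb =>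
    have hD {n : ℕ} {u : FreeLieAlgebra R (ℕ × X)} (hu : u ∈ lengthLE R (ℕ × X) n) :
        shift R X u ∈ lengthLE R (ℕ × X) n :=
      derivation_mem_lengthLE (fun p : ℕ × X ↦ of R (p.1 + 1, p.2))
        (fun p ↦ monomial_mem_lengthLE R (m := .of (p.1 + 1, p.2)) (n := 1) le_rfl) hu
    have hlie (c d : LieAlgebra.SemiDirectSum (FreeLieAlgebra R (ℕ × X)) R (shiftAction R X)) :
        ⁅c, d⁆.left = ⁅c.left, d.left⁆ + c.right • shift R X d.left
          - d.right • shift R X c.left := rfl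
    rw [monomial_mul, LieHom.map_lie, lengthAway_mul, hlie]
    refine sub_mem (add_mem (lie_mem_lengthLE R ha hb) (Submodule.smul_mem _ _ ?_))
      (Submodule.smul_mem _ _ ?_)
    · exact lengthLE_mono R (Nat.le_add_left _ _) (hD hb)
    · exact lengthLE_mono R (Nat.le_add_right _ _) (hD ha)

end Elimination

/-! ### Torsion-freeness -/

section Kill

variable (R : Type*) [CommRing R] {X : Type*}

open scoped Classical in
/-- The endomorphism sending the generators in `A` to zero and fixing all the others. -/
def kill (A : Finset X) : FreeLieAlgebra R X →ₗ⁅R⁆ FreeLieAlgebra R X :=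
  lift R fun x ↦ if x ∈ A then 0 else of R x

theorem kill_of_mem {A : Finset X} {x : X} (h : x ∈ A) : kill R A (of R x) = 0 := by
  simp [kill, h]

theorem eventually_kill_eq_zero (u : FreeLieAlgebra R X) :
    ∀ᶠ A : Finset X in atTop, kill R A u = 0 := by
  induction u using monomial_induction with
  | monomial m =>
    induction m using FreeMagma.recOnMul with
    | ih1 x =>
      filter_upwards [eventually_ge_atTop {x}] with A hA
      exact kill_of_mem R (Finset.singleton_subset_iff.1 hA)
    | ih2 a b ha _ =>
      filter_upwards [ha] with A hA
      simp [hA]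
  | zero => simp
  | add a b ha hb =>
    filter_upwards [ha, hb] with A hA hB
    simp [hA, hB]
  | smul r a ha =>
    filter_upwards [ha] with A hA
    simp [hA]

open scoped Classical in
theorem kill_insert (x : X) (A : Finset X) (u : FreeLieAlgebra R X) :
    kill R (insert x A) u = kill R A (kill R {x} u) := by
  have h : kill R (insert x A) = (kill R A).comp (kill R {x}) := by
    ext y
    by_cases hy : y = x
    · simp [kill, hy]
    · simp [kill, hy]
  exact DFunLike.congr_fun h u

theorem eq_zero_of_forall_kill_singleton {u : FreeLieAlgebra R X} (h : ∀ x, kill R {x} u = u) :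
    u = 0 := by
  classical
  have hA (A : Finset X) : kill R A u = u := by
    induction A using Finset.induction_on with
    | empty =>
      have : kill R (∅ : Finset X) = LieHom.id := by
        ext x
        simp [kill]
      simp [this]
    | insert x A _ ih => rw [kill_insert, h, ih]
  obtain ⟨A, hA₀⟩ := (eventually_kill_eq_zero R u).exists
  rw [← hA A, hA₀]

theorem kill_singleton_monomial (x : X) (m : FreeMagma X) :
    kill R {x} (monomial R m) = if lengthAway x m < m.length then 0 else monomial R m := by
  induction m using FreeMagma.recOnMul with
  | ih1 y =>
    by_cases hy : y = x
    · subst hy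
      simp [lengthAway_of_self, FreeMagma.length, kill]
    · simp [lengthAway_of_ne hy, FreeMagma.length, kill, hy]
  | ih2 a b ha hb =>
    have ha' := lengthAway_le x a
    have hb' := lengthAway_le x b
    rw [monomial_mul, LieHom.map_lie, ha, hb, lengthAway_mul, length_mul]
    split_ifs <;> first | omega | simp

theorem eliminate_sub_kill_left_mem (x : X) {n : ℕ} {u : FreeLieAlgebra R X}
    (hu : u ∈ lengthLE R X (n + 1)) :
    (eliminate R x (u - kill R {x} u)).left ∈ lengthLE R (ℕ × X) n := by
  induction hu using Submodule.span_induction with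
  | mem a ha =>
    obtain ⟨m, hm, rfl⟩ := ha
    rw [kill_singleton_monomial]
    split_ifs with h
    · rw [sub_zero]
      exact lengthLE_mono R (by have : m.length ≤ n + 1 := hm; omega)
        (eliminate_monomial_left_mem R x m)
    · simp
  | zero => simp
  | add a b _ _ ha hb =>
    have : a + b - kill R {x} (a + b) = (a - kill R {x} a) + (b - kill R {x} b) := by
      rw [map_add]; abel
    rw [this, map_add]
    exact add_mem ha hb
  | smul r a _ ha =>
    rw [map_smul, ← smul_sub, map_smul]
    exact Submodule.smul_mem _ r ha

end Kill

section TorsionFree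

variable {R : Type*} [CommRing R] [IsDomain R]

theorem eq_zero_of_smul_eq_zero_of_mem_lengthLE {α : R} (hα : α ≠ 0) (n : ℕ) :
    ∀ {X : Type*} {u : FreeLieAlgebra R X}, u ∈ lengthLE R X n → α • u = 0 → u = 0 := by
  induction n with
  | zero =>
    intro X u hu _
    simpa [lengthLE_zero] using hu
  | succ n ih =>
    intro X u hu h
    refine eq_zero_of_forall_kill_singleton R fun x ↦ ?_
    have hw : α • eliminate R x (u - kill R {x} u) = 0 := by
      rw [← map_smul, smul_sub, ← map_smul, h, map_zero, sub_zero, map_zero]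
    have hl := ih (eliminate_sub_kill_left_mem R x hu)
      (congrArg LieAlgebra.SemiDirectSum.left hw)
    have hr : α * (eliminate R x (u - kill R {x} u)).right = 0 :=
      congrArg LieAlgebra.SemiDirectSum.right hw
    have h₀ : eliminate R x (u - kill R {x} u) = 0 :=
      LieAlgebra.SemiDirectSum.ext hl ((mul_eq_zero.1 hr).resolve_left hα)
    exact (sub_eq_zero.1 ((map_eq_zero_iff _ (eliminate_injective R x)).1 h₀)).symm

/-- A free Lie algebra over an integral domain has no torsion. -/
theorem eq_zero_of_smul_eq_zero {X : Type*} {α : R} (hα : α ≠ 0) {u : FreeLieAlgebra R X}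
    (h : α • u = 0) : u = 0 :=
  let ⟨n, hn⟩ := exists_mem_lengthLE R u
  eq_zero_of_smul_eq_zero_of_mem_lengthLE hα n hn h

end TorsionFree

/-! ### The length grading -/

section Grading

variable (R : Type*) [CommRing R] {X : Type*}

variable (X) in
/-- The homomorphism multiplying each generator by the polynomial variable. -/
def gradeHom :
    FreeLieAlgebra R X →ₗ⁅R⁆ Polynomial R ⊗[R] FreeLieAlgebra R X :=
  lift R fun x ↦ Polynomial.X ⊗ₜ of R x

theorem gradeHom_monomial (m : FreeMagma X) :
    gradeHom R X (monomial R m) = (Polynomial.X ^ m.length) ⊗ₜ monomial R m := by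
  induction m using FreeMagma.recOnMul with
  | ih1 x => simp [gradeHom, FreeMagma.length]
  | ih2 a b ha hb =>
    rw [monomial_mul, LieHom.map_lie, ha, hb, LieAlgebra.ExtendScalars.bracket_tmul, length_mul,
      pow_add]

theorem exists_gradeHom_eq_smul (v : FreeLieAlgebra R X) :
    ∃ w, gradeHom R X v = (Polynomial.X : Polynomial R) • w := by
  induction v using monomial_induction with
  | monomial m =>
    refine ⟨(Polynomial.X ^ (m.length - 1)) ⊗ₜ monomial R m, ?_⟩
    rw [gradeHom_monomial, smul_tmul', smul_eq_mul, ← pow_succ',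
      Nat.sub_add_cancel m.length_pos]
  | zero => exact ⟨0, by simp⟩
  | add a b ha hb =>
    obtain ⟨c, hc⟩ := ha
    obtain ⟨d, hd⟩ := hb
    exact ⟨c + d, by rw [map_add, hc, hd, smul_add]⟩
  | smul r a ha =>
    obtain ⟨c, hc⟩ := ha
    exact ⟨r • c, by rw [map_smul, hc, smul_comm]⟩

/-- The coefficient of the `i`-th power of the polynomial variable. -/
def tensorCoeff (M : Type*) [AddCommGroup M] [Module R M] (i : ℕ) :
    Polynomial R ⊗[R] M →ₗ[R] M :=
  (TensorProduct.lid R M).toLinearMap ∘ₗ (Polynomial.lcoeff R i).rTensor M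

@[simp]
theorem tensorCoeff_tmul {M : Type*} [AddCommGroup M] [Module R M] (i : ℕ) (p : Polynomial R)
    (a : M) : tensorCoeff R M i (p ⊗ₜ a) = p.coeff i • a := by
  simp [tensorCoeff]

theorem tensorCoeff_X_pow_smul {M : Type*} [AddCommGroup M] [Module R M] {i k : ℕ} (h : i < k)
    (w : Polynomial R ⊗[R] M) :
    tensorCoeff R M i ((Polynomial.X ^ k : Polynomial R) • w) = 0 := by
  induction w using TensorProduct.induction_on with
  | zero => simp
  | tmul p a =>
    rw [smul_tmul', smul_eq_mul, tensorCoeff_tmul, Polynomial.coeff_X_pow_mul', if_neg (by omega),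
      zero_smul]
  | add a b ha hb => rw [smul_add, map_add, ha, hb, add_zero]

theorem eventually_sum_tensorCoeff_gradeHom (u : FreeLieAlgebra R X) :
    ∀ᶠ n in atTop, ∑ i ∈ Finset.range n, tensorCoeff R _ i (gradeHom R X u) = u := by
  induction u using monomial_induction with
  | monomial m =>
    filter_upwards [eventually_gt_atTop m.length] with n hn
    simp [gradeHom_monomial, Polynomial.coeff_X_pow, hn]
  | zero => simp
  | add a b ha hb =>
    filter_upwards [ha, hb] with n hn hk
    simp [Finset.sum_add_distrib, hn, hk]
  | smul r a ha =>
    filter_upwards [ha] with n hn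
    simp [← Finset.smul_sum, hn]

theorem exists_pow_smul_gradeHom {u v : FreeLieAlgebra R X} {α : R} (h : α • u = ⁅v, u⁆)
    (k : ℕ) : ∃ w, α ^ k • gradeHom R X u = (Polynomial.X ^ k : Polynomial R) • w := by
  obtain ⟨v', hv⟩ := exists_gradeHom_eq_smul R v
  induction k with
  | zero => exact ⟨_, by rw [pow_zero, pow_zero, one_smul, one_smul]⟩
  | succ k ih =>
    obtain ⟨w, hw⟩ := ih
    refine ⟨⁅v', w⁆, ?_⟩
    rw [pow_succ, mul_smul, ← map_smul, h, LieHom.map_lie, hv, ← lie_smul, hw, pow_succ', mul_smul]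
    exact (smul_lie (Polynomial.X : Polynomial R) v' _).trans
      (congrArg _ (lie_smul (Polynomial.X ^ k : Polynomial R) v' w))

end Grading

end

end FreeLieAlgebra

open FreeLieAlgebra in
/-- In a free Lie algebra over an integral domain, if `⁅u, v⁆ + α • u = 0` with
`α ≠ 0`, then `u = 0`. -/
theorem eq_zero_of_prod_shift_eq_zero {R : Type*} [CommRing R] [IsDomain R] {X : Type*}
    (u v : FreeLieAlgebra R X) (α : R) (hα : α ≠ 0) (h : ⁅u, v⁆ + α • u = 0) :
    u = 0 := by
  have huv : α • u = ⁅v, u⁆ := by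
    rw [← lie_skew, eq_neg_iff_add_eq_zero, add_comm, h]
  have hc (i : ℕ) : tensorCoeff R _ i (gradeHom R X u) = 0 := by
    obtain ⟨w, hw⟩ := exists_pow_smul_gradeHom R huv (i + 1)
    refine eq_zero_of_smul_eq_zero (pow_ne_zero (i + 1) hα) ?_
    rw [← map_smul, hw, tensorCoeff_X_pow_smul R i.lt_succ_self]
  obtain ⟨n, hn⟩ := (eventually_sum_tensorCoeff_gradeHom R u).exists
  rw [← hn, Finset.sum_eq_zero fun i _ ↦ hc i]
end

section
/- Let R be an integral domain and L any Lie algebra over R. Let u, v ∈ L and let α₁, …, αₙ be pairwise distinct elements of R such that for each i = 1, …, n there exists uᵢ ∈ L with u = ⁅uᵢ, v⁆ + αᵢ • uᵢ. Then there exist w ∈ L and a nonzero γ ∈ R such that γ • u = w(v+α₁)(v+α₂)⋯(v+αₙ), where the right-hand side denotes the left-normed iterated product defined by w₀ = w and w_j = ⁅w_{j−1}, v⁆ + α_j • w_{j−1}. -/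
/-- The left-normed iterated product `w(v+α₁)(v+α₂)⋯(v+αₙ)`, where
`u(v+α)` denotes `⁅u, v⁆ + α • u`. -/
def leftNormedProd {R L : Type*} [CommRing R] [LieRing L] [LieAlgebra R L]
    (v : L) (w : L) : List R → L
  | [] => w
  | α :: αs => leftNormedProd v (⁅w, v⁆ + α • w) αs

open Polynomial in
/-- The left-normed product is a polynomial in the operator `x ↦ ⁅x, v⁆` applied to `w`. -/
theorem leftNormedProd_eq_aeval {R L : Type*} [CommRing R] [LieRing L] [LieAlgebra R L]
    (v w : L) (l : List R) :
    leftNormedProd v w l =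
      aeval (-LieAlgebra.ad R L v) (l.map fun a => (X + C a : R[X])).prod w := by
  induction l generalizing w with
  | nil => simp [leftNormedProd]
  | cons a l ih =>
    rw [leftNormedProd, ih, List.map_cons, List.prod_cons, mul_comm, map_mul, Module.End.mul_apply]
    simp [Module.algebraMap_end_apply]

open Polynomial in
/-- If `u` lies in the range of `f + a` for every `a` in a duplicate-free list, then a nonzero
multiple of `u` lies in the range of the product of these operators. -/
theorem exists_smul_eq_aeval_prod_X_add_C {R M : Type*} [CommRing R] [IsDomain R]
    [AddCommGroup M] [Module R M] (f : Module.End R M) (u : M) (l : List R) (hl : l.Nodup)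
    (h : ∀ a ∈ l, ∃ x : M, u = aeval f (X + C a : R[X]) x) :
    ∃ (w : M) (γ : R), γ ≠ 0 ∧
      γ • u = aeval f (l.map fun a => (X + C a : R[X])).prod w := by
  induction l with
  | nil => exact ⟨u, 1, one_ne_zero, by simp⟩
  | cons a l ih =>
    obtain ⟨hal, hl⟩ := List.nodup_cons.mp hl
    obtain ⟨w, γ, hγ, hw⟩ := ih hl fun b hb => h b (List.mem_cons_of_mem _ hb)
    obtain ⟨x, hx⟩ := h a List.mem_cons_self
    rw [List.map_cons, List.prod_cons]
    set p := (l.map fun b => (X + C b : R[X])).prod with hp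
    have hc : p.eval (-a) ≠ 0 := by
      rw [hp, eval_list_prod, List.map_map, Ne, List.prod_eq_zero_iff]
      simp only [List.mem_map, Function.comp_apply, eval_add, eval_X, eval_C, not_exists, not_and]
      intro b hb hba
      exact hal ((neg_add_eq_zero.mp hba) ▸ hb)
    obtain ⟨q, hq⟩ := X_sub_C_dvd_sub_C_eval (a := -a) (p := p)
    have hq' : C (p.eval (-a)) = p - (X + C a) * q := by
      rw [C_neg, sub_neg_eq_add] at hq
      linear_combination -hq
    refine ⟨γ • x - aeval f q w, p.eval (-a) * γ, mul_ne_zero hc hγ, ?_⟩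
    have key : (p.eval (-a) * γ) • u = aeval f (C (p.eval (-a))) (γ • u) := by
      rw [aeval_C, Module.algebraMap_end_apply, mul_smul]
    calc (p.eval (-a) * γ) • u
        = γ • aeval f p u - aeval f ((X + C a) * q) (γ • u) := by
          rw [key, hq', map_sub, LinearMap.sub_apply, map_smul]
      _ = γ • aeval f (p * (X + C a)) x - aeval f ((X + C a) * q * p) w := by
          rw [hw, map_mul _ p, map_mul _ _ p, Module.End.mul_apply, Module.End.mul_apply, ← hx]
      _ = aeval f ((X + C a) * p) (γ • x - aeval f q w) := by
          rw [map_sub, map_smul, ← Module.End.mul_apply, ← map_mul, mul_comm p,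
            mul_right_comm]

/-- If `u = ⁅uᵢ, v⁆ + αᵢ • uᵢ` for pairwise distinct scalars `α₁, …, αₙ` of an
integral domain `R`, then `γ • u = w(v+α₁)⋯(v+αₙ)` for some `w ∈ L` and nonzero
`γ ∈ R`. -/
theorem main_lemma {R L : Type*} [CommRing R] [IsDomain R] [LieRing L] [LieAlgebra R L]
    (u v : L) (n : ℕ) (α : Fin n → R) (hα : Function.Injective α)
    (h : ∀ i : Fin n, ∃ uᵢ : L, u = ⁅uᵢ, v⁆ + α i • uᵢ) :
    ∃ (w : L) (γ : R), γ ≠ 0 ∧ γ • u = leftNormedProd v w (List.ofFn α) := by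
  obtain ⟨w, γ, hγ, hw⟩ := exists_smul_eq_aeval_prod_X_add_C (-LieAlgebra.ad R L v) u
    (List.ofFn α) (List.nodup_ofFn.mpr hα) (by
      intro a ha
      obtain ⟨i, rfl⟩ := (List.mem_ofFn' _ _).mp ha
      obtain ⟨x, hx⟩ := h i
      exact ⟨x, by simp [hx, Module.algebraMap_end_apply]⟩)
  exact ⟨w, γ, hγ, hw.trans (leftNormedProd_eq_aeval v w _).symm⟩
end

section
/- Let R be an integral domain of characteristic zero and L the free Lie algebra over R on a set X. Let b ∈ L be nonzero and v ∈ L. If for every natural number n there exists uₙ ∈ L with v = ⁅uₙ, b⁆ + (n : R) • uₙ, then v = 0. -/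
section LyndonWords

variable {X : Type*} [LinearOrder X]

/-- A nonempty word is Lyndon if it is lexicographically smaller than each of its nonempty proper
suffixes. -/
def IsLyndon (w : List X) : Prop :=
  w ≠ [] ∧ ∀ p s : List X, p ≠ [] → s ≠ [] → w = p ++ s → w < s

theorem List.lt_append_of_ne_nil (a : List X) {c : List X} (hc : c ≠ []) : a < a ++ c := by
  obtain ⟨x, c, rfl⟩ := List.exists_cons_of_ne_nil hc
  simpa using List.append_left_lt (l₁ := a) (List.nil_lt_cons x c)

theorem List.append_lt_append_left_iff (a : List X) {b c : List X} :
    a ++ b < a ++ c ↔ b < c := by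
  induction a with
  | nil => simp
  | cons x a ih => simpa using ih

/-- If `a < b`, then either `a` is a proper prefix of `b`, or the first difference occurs inside
both words. -/
theorem List.lt_prefix_or_append_lt {a b : List X} (h : a < b) :
    (∃ c, c ≠ [] ∧ b = a ++ c) ∨ ∀ c d, a ++ c < b ++ d := by
  induction a generalizing b with
  | nil => exact Or.inl ⟨b, by rintro rfl; simp at h, rfl⟩
  | cons x a ih =>
    cases b with
    | nil => simp at h
    | cons y b =>
      rcases List.cons_lt_cons_iff.1 h with h | ⟨rfl, h'⟩
      · exact Or.inr fun c d => List.cons_lt_cons_iff.2 (Or.inl h)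
      · rcases ih h' with ⟨c, hc, rfl⟩ | h
        · exact Or.inl ⟨c, hc, rfl⟩
        · exact Or.inr fun c d => List.cons_lt_cons_iff.2 (Or.inr ⟨rfl, h c d⟩)

theorem List.append_lt_append_of_length_le {a b : List X} (h : a < b) (hl : b.length ≤ a.length)
    (c d : List X) : a ++ c < b ++ d := by
  rcases List.lt_prefix_or_append_lt h with ⟨e, he, rfl⟩ | h
  · have := List.length_pos_iff.2 he
    rw [List.length_append] at hl
    omega
  · exact h c d

theorem isLyndon_singleton (x : X) : IsLyndon [x] := by
  refine ⟨by simp, fun p s hp hs h => ?_⟩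
  have h1 := congrArg List.length h
  have := List.length_pos_iff.2 hp
  have := List.length_pos_iff.2 hs
  simp at h1
  omega

/-- The nonempty proper suffixes of `u ++ v`, for `u` and `v` nonempty. -/
theorem List.append_eq_append_suffix_cases {X : Type*} {u v p s : List X} (hp : p ≠ [])
    (h : u ++ v = p ++ s) :
    s = v ∨ (∃ q, q ≠ [] ∧ v = q ++ s) ∨ ∃ t, t ≠ [] ∧ u = p ++ t ∧ s = t ++ v := by
  rcases List.append_eq_append_iff.1 h with ⟨q, rfl, rfl⟩ | ⟨t, rfl, rfl⟩
  · by_cases hq : q = []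
    · subst hq; simp
    · exact Or.inr (Or.inl ⟨q, hq, rfl⟩)
  · by_cases ht : t = []
    · subst ht; simp
    · exact Or.inr (Or.inr ⟨t, ht, rfl, rfl⟩)

theorem IsLyndon.append_lt {u v : List X} (hu : u ≠ []) (hv : IsLyndon v) (huv : u < v) :
    u ++ v < v := by
  rcases List.lt_prefix_or_append_lt huv with ⟨c, hc, rfl⟩ | h
  · exact (List.append_lt_append_left_iff u).2 (hv.2 u c hu hc rfl)
  · simpa using h v []

theorem IsLyndon.append {u v : List X} (hu : IsLyndon u) (hv : IsLyndon v) (huv : u < v) :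
    IsLyndon (u ++ v) := by
  have hlt := hv.append_lt hu.1 huv
  refine ⟨by simp [hu.1], fun p s hp hs h => ?_⟩
  rcases List.append_eq_append_suffix_cases hp h with rfl | ⟨q, hq, rfl⟩ | ⟨t, ht, rfl, rfl⟩
  · exact hlt
  · exact hlt.trans (hv.2 q s hq hs rfl)
  · exact List.append_lt_append_of_length_le (hu.2 p t hp ht rfl) (by simp) _ _

/-- Commuting Lyndon words are equal. -/
theorem IsLyndon.eq_of_append_comm {u v : List X} (hu : IsLyndon u) (hv : IsLyndon v)
    (h : u ++ v = v ++ u) : u = v := by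
  have aux : ∀ {a b c : List X}, a ≠ [] → IsLyndon b → b = a ++ c →
      a ++ b = b ++ a → c = [] := by
    rintro a b c ha hb rfl hc
    by_contra hne
    have h1 : a ++ c = c ++ a := by simpa using hc
    have h2 := hb.2 a c ha hne rfl
    exact absurd (h2.trans (List.lt_append_of_ne_nil c ha)) (by rw [h1]; exact lt_irrefl _)
  rcases List.append_eq_append_iff.1 h with ⟨c, hc, -⟩ | ⟨c, hc, -⟩
  · have := aux hu.1 hv hc h
    simp [hc, this]
  · have := aux hv.1 hu hc h.symm
    simp [hc, this]

theorem finite_setOf_coe_le (M : Multiset X) : {w : List X | (w : Multiset X) ≤ M}.Finite := by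
  classical
  refine ((M.powerset.bind Multiset.lists).toFinset.finite_toSet).subset fun w hw => ?_
  simpa using hw

end LyndonWords

section HallBasis

variable (R : Type*) [CommRing R] {X : Type*} [LinearOrder X]

/-- `IsHall R w a` says that `a` is the iterated bracket attached to the Lyndon word `w` by
splitting off, recursively, the smallest nonempty proper suffix. -/
inductive IsHall : List X → FreeLieAlgebra R X → Prop
  | of (x : X) : IsHall [x] (FreeLieAlgebra.of R x)
  | lie {u v : List X} {a b : FreeLieAlgebra R X} (hu : IsHall u a) (hv : IsHall v b)
      (huv : u < v) (hs : ∀ p s : List X, p ≠ [] → s ≠ [] → u = p ++ s → v ≤ s) :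
      IsHall (u ++ v) ⁅a, b⁆

variable {R}

theorem IsHall.isLyndon {w : List X} {a : FreeLieAlgebra R X} (h : IsHall R w a) :
    IsLyndon w := by
  induction h with
  | of x => exact isLyndon_singleton x
  | lie _ _ huv _ ihu ihv => exact ihu.append ihv huv

theorem IsLyndon.le_suffix_append {u v : List X} (hv : IsLyndon v)
    (hs : ∀ p s : List X, p ≠ [] → s ≠ [] → u = p ++ s → v ≤ s) {p s : List X} (hp : p ≠ [])
    (hne : s ≠ []) (h : u ++ v = p ++ s) : v ≤ s := by
  rcases List.append_eq_append_suffix_cases hp h with rfl | ⟨q, hq, rfl⟩ | ⟨t, ht, rfl, rfl⟩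
  · exact le_rfl
  · exact (hv.2 q s hq hne rfl).le
  · exact (hs p t hp ht rfl).trans (List.lt_append_of_ne_nil t hv.1).le

theorem IsHall.unique {w : List X} {a b : FreeLieAlgebra R X} (ha : IsHall R w a)
    (hb : IsHall R w b) : a = b := by
  induction ha generalizing b with
  | of x =>
    generalize hw : [x] = w at hb
    cases hb with
    | of y => simp_all
    | @lie u v _ _ hu hv _ _ =>
      have h1 := congrArg List.length hw
      have := List.length_pos_iff.2 hu.isLyndon.1
      have := List.length_pos_iff.2 hv.isLyndon.1
      simp at h1
      omega
  | @lie u v a₁ a₂ hu hv huv hs ihu ihv =>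
    generalize hw : u ++ v = w at hb
    cases hb with
    | of y =>
      have h1 := congrArg List.length hw
      have := List.length_pos_iff.2 hu.isLyndon.1
      have := List.length_pos_iff.2 hv.isLyndon.1
      simp at h1
      omega
    | @lie u' v' b₁ b₂ hu' hv' huv' hs' =>
      have h1 := hv.isLyndon.le_suffix_append hs hu'.isLyndon.1 hv'.isLyndon.1 hw
      have h2 := hv'.isLyndon.le_suffix_append hs' hu.isLyndon.1 hv.isLyndon.1 hw.symm
      obtain rfl := le_antisymm h1 h2
      obtain rfl := List.append_cancel_right hw
      rw [ihu hu', ihv hv']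

variable (R) in
/-- The span of the Hall elements of multidegree `M` whose word is smaller than `m`. -/
noncomputable def hallSpan (M : Multiset X) (m : List X) : Submodule R (FreeLieAlgebra R X) :=
  Submodule.span R {a | ∃ t, IsHall R t a ∧ (t : Multiset X) = M ∧ t < m}

theorem hallSpan_mono (M : Multiset X) {m m' : List X} (h : m ≤ m') :
    hallSpan R M m ≤ hallSpan R M m' :=
  Submodule.span_mono fun _ ⟨t, ht, hM, hlt⟩ => ⟨t, ht, hM, hlt.trans_le h⟩

theorem lie_mem_of_mem_hallSpan {M : Multiset X} {m : List X} {c d : FreeLieAlgebra R X}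
    {S : Submodule R (FreeLieAlgebra R X)} (hc : c ∈ hallSpan R M m)
    (h : ∀ t a, IsHall R t a → (t : Multiset X) = M → t < m → ⁅a, d⁆ ∈ S) : ⁅c, d⁆ ∈ S := by
  induction hc using Submodule.span_induction with
  | mem a ha => obtain ⟨t, ht, hM, hlt⟩ := ha; exact h t a ht hM hlt
  | zero => simp
  | add a b _ _ ha hb => rw [add_lie]; exact S.add_mem ha hb
  | smul r a _ ha => rw [smul_lie]; exact S.smul_mem r ha

theorem lie_mem_symm {X : Type*} {S : Submodule R (FreeLieAlgebra R X)} {a b : FreeLieAlgebra R X}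
    (h : ⁅a, b⁆ ∈ S) : ⁅b, a⁆ ∈ S := by
  rw [← lie_skew]; exact S.neg_mem h

/-- The bracket of two Hall elements straightens to a combination of Hall elements with words
smaller than the larger of the two given words. -/
theorem IsHall.lie_mem_hallSpan {u v : List X} {a b : FreeLieAlgebra R X} (hu : IsHall R u a)
    (hv : IsHall R v b) : ⁅a, b⁆ ∈ hallSpan R (u + v : Multiset X) (max u v) := by
  generalize hM : (u + v : Multiset X) = M
  induction M using Multiset.strongInductionOn generalizing u v a b with
  | ih M ihM =>
  have hmem : ∀ {u v : List X}, (u + v : Multiset X) = M →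
      max u v ∈ {w : List X | (w : Multiset X) ≤ M} := by
    rintro u v rfl
    rcases max_choice u v with h | h <;> rw [h]
    · exact Multiset.le_add_right (u : Multiset X) v
    · exact Multiset.le_add_left (v : Multiset X) u
  have hwf := (finite_setOf_coe_le M).wellFoundedOn (r := (· < ·))
  suffices H : ∀ m ∈ {w : List X | (w : Multiset X) ≤ M}, ∀ (u v : List X)
      (a b : FreeLieAlgebra R X), IsHall R u a → IsHall R v b → (u + v : Multiset X) = M →
      max u v = m → ⁅a, b⁆ ∈ hallSpan R M m from H _ (hmem hM) _ _ _ _ hu hv hM rfl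
  clear hu hv hM
  intro m hmM
  apply hwf.induction hmM
  clear m hmM
  intro m _ ihm u v a b hu hv hM hm
  have main : ∀ {u v : List X} {a b : FreeLieAlgebra R X}, IsHall R u a → IsHall R v b →
      (u + v : Multiset X) = M → v = m → u < v → ⁅a, b⁆ ∈ hallSpan R M m := by
    intro u v a b hu hv hM hvm huv
    have hall : (∀ p s : List X, p ≠ [] → s ≠ [] → u = p ++ s → v ≤ s) →
        ⁅a, b⁆ ∈ hallSpan R M m := fun hs =>
      Submodule.subset_span ⟨u ++ v, hu.lie hv huv hs, by simpa using hM,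
        hvm ▸ hv.isLyndon.append_lt hu.isLyndon.1 huv⟩
    have hinner : ∀ {t u : List X} {c d : FreeLieAlgebra R X}, IsHall R t c → IsHall R u d →
        (t + u : Multiset X) = M → t < v → u < v → ⁅c, d⁆ ∈ hallSpan R M m := by
      intro t u c d ht hu hM ht' hu'
      have hlt : max t u < m := hvm ▸ max_lt ht' hu'
      exact hallSpan_mono M hlt.le (ihm _ (hmem hM) hlt _ _ _ _ ht hu hM rfl)
    generalize hu₀ : u = u₀ at hu
    cases hu with
    | of x =>
      subst hu₀
      refine hall fun p s hp hs h => ?_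
      have h1 := congrArg List.length h
      have := List.length_pos_iff.2 hp
      have := List.length_pos_iff.2 hs
      simp at h1
      omega
    | @lie u₁ u₂ a₁ a₂ hu₁ hu₂ hu₁₂ hs =>
      subst hu₀
      by_cases hle : v ≤ u₂
      · exact hall fun p s hp hne h =>
          hle.trans (hu₂.isLyndon.le_suffix_append hs hp hne h)
      rw [not_le] at hle
      rw [← Multiset.coe_add] at hM
      have hpos₁ : (0 : Multiset X) < u₁ := by
        simpa [pos_iff_ne_zero] using hu₁.isLyndon.1
      have hpos₂ : (0 : Multiset X) < u₂ := by
        simpa [pos_iff_ne_zero] using hu₂.isLyndon.1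
      have h1 : ⁅⁅a₁, b⁆, a₂⁆ ∈ hallSpan R M m := by
        have := ihM (u₁ + v) (by rw [← hM, add_right_comm]; exact lt_add_of_pos_right _ hpos₂)
          hu₁ hv rfl
        rw [max_eq_right (hu₁₂.trans hle).le] at this
        refine lie_mem_of_mem_hallSpan this fun t c ht htM htv => ?_
        exact hinner ht hu₂ (by rw [htM, ← hM, add_right_comm]) htv hle
      have h2 : ⁅⁅a₂, b⁆, a₁⁆ ∈ hallSpan R M m := by
        have := ihM (u₂ + v) (by rw [← hM, add_assoc]; exact lt_add_of_pos_left _ hpos₁)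
          hu₂ hv rfl
        rw [max_eq_right hle.le] at this
        refine lie_mem_of_mem_hallSpan this fun t c ht htM htv => ?_
        exact hinner ht hu₁ (by rw [htM, ← hM, add_comm, add_assoc]) htv (hu₁₂.trans hle)
      have h3 : ⁅⁅a₁, a₂⁆, b⁆ = ⁅⁅a₁, b⁆, a₂⁆ - ⁅⁅a₂, b⁆, a₁⁆ := by
        rw [lie_lie, ← lie_skew a₁ ⁅a₂, b⁆, ← lie_skew a₂ ⁅a₁, b⁆]
        abel
      rw [h3]
      exact Submodule.sub_mem _ h1 h2
  rcases lt_trichotomy u v with h | rfl | h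
  · exact main hu hv hM (by rw [← hm, max_eq_right h.le]) h
  · rw [hu.unique hv, lie_self]; exact Submodule.zero_mem _
  · exact lie_mem_symm (main hv hu (by rw [add_comm, hM]) (by rw [← hm, max_eq_left h.le]) h)

/-- The Hall elements span the free Lie algebra. -/
theorem span_isHall : Submodule.span R {a : FreeLieAlgebra R X | ∃ w, IsHall R w a} = ⊤ := by
  let S : LieSubalgebra R (FreeLieAlgebra R X) :=
    { Submodule.span R {a : FreeLieAlgebra R X | ∃ w, IsHall R w a} with
      lie_mem' := by
        intro a b ha hb
        refine Submodule.span_induction₂ (p := fun a b _ _ => ⁅a, b⁆ ∈ Submodule.span R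
          {a : FreeLieAlgebra R X | ∃ w, IsHall R w a}) ?_ ?_ ?_ ?_ ?_ ?_ ?_ ha hb
        · rintro a b ⟨u, hu⟩ ⟨v, hv⟩
          exact Submodule.span_mono (by rintro _ ⟨t, ht, _⟩; exact ⟨t, ht⟩) (hu.lie_mem_hallSpan hv)
        · simp
        · simp
        · intro a b c _ _ _ h h'; rw [add_lie]; exact Submodule.add_mem _ h h'
        · intro a b c _ _ _ h h'; rw [lie_add]; exact Submodule.add_mem _ h h'
        · intro r a b _ _ h; rw [smul_lie]; exact Submodule.smul_mem _ r h
        · intro r a b _ _ h; rw [lie_smul]; exact Submodule.smul_mem _ r h }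
  let f : FreeLieAlgebra R X →ₗ⁅R⁆ S :=
    FreeLieAlgebra.lift R fun x => ⟨FreeLieAlgebra.of R x, Submodule.subset_span ⟨[x], .of x⟩⟩
  have hf : S.incl.comp f = LieHom.id := by
    ext x
    simp [f]
  rw [eq_top_iff]
  intro a _
  have := LieHom.congr_fun hf a
  rw [← LieHom.id_apply (R := R) a, ← this]
  exact (f a).2

end HallBasis

section LeadingWords

variable {R : Type*} [CommRing R] {X : Type*} [LinearOrder X]

/-- Words are ranked by length, and among words of equal length smaller words rank higher. -/
def wordRank {X : Type*} (w : FreeMonoid X) : ℕ ×ₗ (List X)ᵒᵈ :=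
  toLex (w.length, OrderDual.toDual w.toList)

theorem wordRank_injective {X : Type*} : Function.Injective (wordRank (X := X)) := by
  intro a b h
  have h := congrArg (fun p => OrderDual.ofDual (ofLex p).2) h
  exact FreeMonoid.toList.injective h

theorem wordRank_lt_iff {a b : FreeMonoid X} : wordRank a < wordRank b ↔
    a.length < b.length ∨ a.length = b.length ∧ b.toList < a.toList := by
  simp [wordRank, Prod.Lex.toLex_lt_toLex]

theorem length_le_of_wordRank_le {a b : FreeMonoid X} (h : wordRank a ≤ wordRank b) :
    a.length ≤ b.length := by
  rcases h.lt_or_eq with h | h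
  · rcases wordRank_lt_iff.1 h with h | h
    · exact h.le
    · exact h.1.le
  · rw [wordRank_injective h]

theorem wordRank_mul_lt_mul_left (c : FreeMonoid X) {a b : FreeMonoid X}
    (h : wordRank a < wordRank b) : wordRank (c * a) < wordRank (c * b) := by
  rw [wordRank_lt_iff] at h ⊢
  simpa [FreeMonoid.length_mul, List.append_lt_append_left_iff] using h

theorem wordRank_mul_lt_mul_right (c : FreeMonoid X) {a b : FreeMonoid X}
    (h : wordRank a < wordRank b) : wordRank (a * c) < wordRank (b * c) := by
  rw [wordRank_lt_iff] at h ⊢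
  rcases h with h | ⟨h, h'⟩
  · left; simpa [FreeMonoid.length_mul] using h
  · exact Or.inr ⟨by simpa [FreeMonoid.length_mul] using h,
      List.append_lt_append_of_length_le h' h.le _ _⟩

theorem wordRank_mul_le_mul {a b c d : FreeMonoid X} (h : wordRank a ≤ wordRank b)
    (h' : wordRank c ≤ wordRank d) : wordRank (a * c) ≤ wordRank (b * d) := by
  have h1 : wordRank (a * c) ≤ wordRank (b * c) := by
    rcases h.lt_or_eq with h | h
    · exact (wordRank_mul_lt_mul_right c h).le
    · rw [wordRank_injective h]
  have h2 : wordRank (b * c) ≤ wordRank (b * d) := by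
    rcases h'.lt_or_eq with h | h
    · exact (wordRank_mul_lt_mul_left b h).le
    · rw [wordRank_injective h]
  exact h1.trans h2

theorem eq_of_wordRank_le_of_mul_eq {a b c d : FreeMonoid X} (h : wordRank a ≤ wordRank b)
    (h' : wordRank c ≤ wordRank d) (heq : a * c = b * d) : a = b ∧ c = d := by
  have hab : a = b := by
    by_contra hne
    have h1 := wordRank_mul_lt_mul_right c (h.lt_of_ne (wordRank_injective.ne hne))
    rw [heq] at h1
    exact absurd (wordRank_mul_le_mul le_rfl h') (not_le.2 h1)
  subst hab
  exact ⟨rfl, mul_left_cancel heq⟩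

/-- `w` is the highest ranked word occurring in `f`. -/
def IsLeadingWord (f : MonoidAlgebra R (FreeMonoid X)) (w : FreeMonoid X) : Prop :=
  f.coeff w ≠ 0 ∧ ∀ z, f.coeff z ≠ 0 → wordRank z ≤ wordRank w

theorem MonoidAlgebra.exists_mul_of_coeff_mul_ne_zero {G : Type*} [Mul G]
    {f g : MonoidAlgebra R G} {z : G} (h : (f * g).coeff z ≠ 0) :
    ∃ a b, f.coeff a ≠ 0 ∧ g.coeff b ≠ 0 ∧ a * b = z := by
  classical
  obtain ⟨a, ha, b, hb, hab⟩ := Finset.mem_mul.1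
    (MonoidAlgebra.support_coeff_mul_subset f g (Finsupp.mem_support_iff.2 h))
  exact ⟨a, b, Finsupp.mem_support_iff.1 ha, Finsupp.mem_support_iff.1 hb, hab⟩

theorem IsLeadingWord.wordRank_le_of_mul {f g : MonoidAlgebra R (FreeMonoid X)}
    {w w' z : FreeMonoid X} (hf : IsLeadingWord f w) (hg : IsLeadingWord g w')
    (hz : (f * g).coeff z ≠ 0) : wordRank z ≤ wordRank (w * w') := by
  obtain ⟨a, b, ha, hb, rfl⟩ := MonoidAlgebra.exists_mul_of_coeff_mul_ne_zero hz
  exact wordRank_mul_le_mul (hf.2 a ha) (hg.2 b hb)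

theorem IsLeadingWord.coeff_mul {f g : MonoidAlgebra R (FreeMonoid X)} {w w' : FreeMonoid X}
    (hf : IsLeadingWord f w) (hg : IsLeadingWord g w') :
    (f * g).coeff (w * w') = f.coeff w * g.coeff w' :=
  MonoidAlgebra.coeff_mul_mul_of_uniqueMul fun a b ha hb h =>
    eq_of_wordRank_le_of_mul_eq (hf.2 a (Finsupp.mem_support_iff.1 ha))
      (hg.2 b (Finsupp.mem_support_iff.1 hb)) h

attribute [local instance] LieRing.ofAssociativeRing

theorem IsLeadingWord.coeff_lie {f g : MonoidAlgebra R (FreeMonoid X)} {w w' : FreeMonoid X}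
    (hf : IsLeadingWord f w) (hg : IsLeadingWord g w')
    (hlt : wordRank (w' * w) < wordRank (w * w')) :
    ⁅f, g⁆.coeff (w * w') = f.coeff w * g.coeff w' := by
  have h : (g * f).coeff (w * w') = 0 := by
    by_contra h
    exact absurd (hg.wordRank_le_of_mul hf h) (not_le.2 hlt)
  rw [LieRing.of_associative_ring_bracket, MonoidAlgebra.coeff_sub, Finsupp.sub_apply, h, sub_zero,
    hf.coeff_mul hg]

theorem IsLeadingWord.lie {f g : MonoidAlgebra R (FreeMonoid X)} {w w' : FreeMonoid X}
    (hf : IsLeadingWord f w) (hg : IsLeadingWord g w')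
    (hlt : wordRank (w' * w) < wordRank (w * w')) (hne : f.coeff w * g.coeff w' ≠ 0) :
    IsLeadingWord ⁅f, g⁆ (w * w') := by
  refine ⟨by rwa [hf.coeff_lie hg hlt], fun z hz => ?_⟩
  by_contra h
  apply hz
  rw [LieRing.of_associative_ring_bracket, MonoidAlgebra.coeff_sub, Finsupp.sub_apply]
  have h1 : (f * g).coeff z = 0 := by
    by_contra h'
    exact h (hf.wordRank_le_of_mul hg h')
  have h2 : (g * f).coeff z = 0 := by
    by_contra h'
    exact h ((hg.wordRank_le_of_mul hf h').trans hlt.le)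
  rw [h1, h2, sub_zero]

theorem IsLeadingWord.exists_coeff_lie_ne_zero [IsDomain R]
    {f g : MonoidAlgebra R (FreeMonoid X)} {w w' : FreeMonoid X} (hf : IsLeadingWord f w)
    (hg : IsLeadingWord g w') (hne : w * w' ≠ w' * w) :
    ∃ z : FreeMonoid X, z.length = w.length + w'.length ∧ ⁅f, g⁆.coeff z ≠ 0 := by
  rcases lt_or_gt_of_ne (wordRank_injective.ne hne) with h | h
  · refine ⟨w' * w, by rw [FreeMonoid.length_mul, add_comm], ?_⟩
    rw [← lie_skew, MonoidAlgebra.coeff_neg, Finsupp.neg_apply, hg.coeff_lie hf h]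
    exact neg_ne_zero.2 (mul_ne_zero hg.1 hf.1)
  · refine ⟨w * w', FreeMonoid.length_mul _ _, ?_⟩
    rw [hf.coeff_lie hg h]
    exact mul_ne_zero hf.1 hg.1

variable (R) in
/-- The canonical map from the free Lie algebra to noncommutative polynomials. -/
noncomputable def toWords {X : Type*} :
    FreeLieAlgebra R X →ₗ⁅R⁆ MonoidAlgebra R (FreeMonoid X) :=
  FreeLieAlgebra.lift R fun x => MonoidAlgebra.single (FreeMonoid.of x) 1

theorem IsHall.isLeadingWord [Nontrivial R] {w : List X} {a : FreeLieAlgebra R X}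
    (h : IsHall R w a) : IsLeadingWord (toWords R a) (FreeMonoid.ofList w) ∧
      (toWords R a).coeff (FreeMonoid.ofList w) = 1 := by
  induction h with
  | of x =>
    have : FreeMonoid.ofList [x] = FreeMonoid.of x := rfl
    rw [this]
    refine ⟨⟨by simp [toWords], fun z hz => ?_⟩, by simp [toWords]⟩
    have : z = FreeMonoid.of x := by
      by_contra hne
      exact hz (by simp [toWords, Ne.symm hne])
    rw [this]
  | @lie u v a b hu hv huv _ ihu ihv =>
    have hlt : wordRank (FreeMonoid.ofList v * FreeMonoid.ofList u) <
        wordRank (FreeMonoid.ofList u * FreeMonoid.ofList v) := by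
      refine wordRank_lt_iff.2 (Or.inr ⟨by simp [FreeMonoid.length_mul, add_comm], ?_⟩)
      exact (hv.isLyndon.append_lt hu.isLyndon.1 huv).trans
        (List.lt_append_of_ne_nil v hu.isLyndon.1)
    have h1 : (toWords R a).coeff (FreeMonoid.ofList u) *
        (toWords R b).coeff (FreeMonoid.ofList v) = 1 := by rw [ihu.2, ihv.2, one_mul]
    rw [LieHom.map_lie, FreeMonoid.ofList_append]
    exact ⟨ihu.1.lie ihv.1 hlt (h1 ▸ one_ne_zero), by rw [ihu.1.coeff_lie ihv.1 hlt, h1]⟩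

/-- The leading word of a nonzero Lie polynomial is Lyndon; in particular the free Lie algebra
embeds into the noncommutative polynomials. -/
theorem exists_isLyndon_isLeadingWord [Nontrivial R] {a : FreeLieAlgebra R X} (ha : a ≠ 0) :
    ∃ w : FreeMonoid X, IsLyndon w.toList ∧ IsLeadingWord (toWords R a) w := by
  classical
  choose P hP using fun w : {w : List X // ∃ a, IsHall R w a} => w.2
  have hrange : {a : FreeLieAlgebra R X | ∃ w, IsHall R w a} ⊆ Set.range P := by
    rintro a ⟨w, hw⟩
    exact ⟨⟨w, a, hw⟩, (hP _).unique hw⟩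
  have hmem : a ∈ Submodule.span R (Set.range P) :=
    Submodule.span_mono hrange (span_isHall (R := R) (X := X) ▸ Submodule.mem_top)
  obtain ⟨c, rfl⟩ := (Finsupp.mem_span_range_iff_exists_finsupp).1 hmem
  have hc : c.support.Nonempty := by
    rw [Finsupp.support_nonempty_iff]
    rintro rfl
    simp at ha
  obtain ⟨w, hw, hmax⟩ := c.support.exists_max_image
    (fun w => wordRank (FreeMonoid.ofList w.1)) hc
  have hcoeff : ∀ z, (toWords R (c.sum fun i r => r • P i)).coeff z =
      ∑ i ∈ c.support, c i * (toWords R (P i)).coeff z := by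
    intro z
    simp [Finsupp.sum, MonoidAlgebra.coeff_sum, Finsupp.finsetSum_apply]
  refine ⟨FreeMonoid.ofList w.1, (hP w).isLyndon, ?_, fun z hz => ?_⟩
  · rw [hcoeff, Finset.sum_eq_single_of_mem w hw, (hP w).isLeadingWord.2, mul_one]
    · exact Finsupp.mem_support_iff.1 hw
    · intro i hi hiw
      by_contra hne
      have h1 := (hP i).isLeadingWord.1.2 _ (right_ne_zero_of_mul hne)
      have h2 := wordRank_injective (le_antisymm h1 (hmax i hi))
      exact hiw (Subtype.ext (FreeMonoid.ofList.injective h2)).symm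
  · rw [hcoeff] at hz
    obtain ⟨i, hi, hne⟩ := Finset.exists_ne_zero_of_sum_ne_zero hz
    exact ((hP i).isLeadingWord.1.2 z (right_ne_zero_of_mul hne)).trans (hmax i hi)

end LeadingWords

section Divisibility

variable {R : Type*} [CommRing R] {X : Type*}

attribute [local instance] LieRing.ofAssociativeRing

/-- All words occurring in `f` have length at least `k`. -/
def LengthGE (k : ℕ) (f : MonoidAlgebra R (FreeMonoid X)) : Prop :=
  ∀ z, f.coeff z ≠ 0 → k ≤ z.length

theorem LengthGE.mul {k l : ℕ} {f g : MonoidAlgebra R (FreeMonoid X)} (hf : LengthGE k f)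
    (hg : LengthGE l g) : LengthGE (k + l) (f * g) := by
  intro z hz
  obtain ⟨a, b, ha, hb, rfl⟩ := MonoidAlgebra.exists_mul_of_coeff_mul_ne_zero hz
  rw [FreeMonoid.length_mul]
  exact add_le_add (hf a ha) (hg b hb)

theorem LengthGE.add {k : ℕ} {f g : MonoidAlgebra R (FreeMonoid X)} (hf : LengthGE k f)
    (hg : LengthGE k g) : LengthGE k (f + g) := by
  intro z hz
  by_contra h
  apply hz
  rw [MonoidAlgebra.coeff_add, Finsupp.add_apply, not_ne_iff.1 (mt (hf z) h),
    not_ne_iff.1 (mt (hg z) h), add_zero]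

theorem LengthGE.smul {k : ℕ} {f : MonoidAlgebra R (FreeMonoid X)} (r : R) (hf : LengthGE k f) :
    LengthGE k (r • f) := by
  intro z hz
  rw [MonoidAlgebra.coeff_smul, Finsupp.smul_apply, smul_eq_mul] at hz
  exact hf z (right_ne_zero_of_mul hz)

theorem LengthGE.lie {k l : ℕ} {f g : MonoidAlgebra R (FreeMonoid X)} (hf : LengthGE k f)
    (hg : LengthGE l g) : LengthGE (k + l) ⁅f, g⁆ := by
  rw [LieRing.of_associative_ring_bracket, sub_eq_add_neg, ← neg_one_smul R (g * f)]
  exact (hf.mul hg).add (LengthGE.smul _ (add_comm l k ▸ hg.mul hf))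

theorem lengthGE_one_toWords (a : FreeLieAlgebra R X) : LengthGE 1 (toWords R a) := by
  let _ : LinearOrder X := IsWellOrder.linearOrder WellOrderingRel
  have ha : a ∈ Submodule.span R {a : FreeLieAlgebra R X | ∃ w, IsHall R w a} :=
    span_isHall (R := R) (X := X) ▸ Submodule.mem_top
  induction ha using Submodule.span_induction with
  | mem a h =>
    obtain ⟨w, hw⟩ := h
    induction hw with
    | of x =>
      intro z hz
      have : z = FreeMonoid.of x := by
        by_contra hne
        exact hz (by simp [toWords, Ne.symm hne])
      simp [this]
    | lie _ _ _ _ iha ihb =>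
      rw [LieHom.map_lie]
      exact fun z hz => (Nat.le_add_right 1 1).trans (iha.lie ihb z hz)
  | zero => intro z hz; simp at hz
  | add a b _ _ ha hb => rw [map_add]; exact ha.add hb
  | smul r a _ ha => rw [map_smul]; exact ha.smul r

theorem toWords_injective [Nontrivial R] : Function.Injective (toWords R (X := X)) := by
  let _ : LinearOrder X := IsWellOrder.linearOrder WellOrderingRel
  rw [injective_iff_map_eq_zero]
  intro a h
  by_contra ha
  obtain ⟨w, -, hw⟩ := exists_isLyndon_isLeadingWord ha
  exact hw.1 (by simp [h])

/-- Commuting elements of a free Lie algebra over a domain are linearly dependent. -/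
theorem exists_smul_eq_smul_of_lie_eq_zero [IsDomain R] {b y : FreeLieAlgebra R X} (hb : b ≠ 0)
    (hy : y ≠ 0) (h : ⁅y, b⁆ = 0) : ∃ r s : R, r ≠ 0 ∧ s ≠ 0 ∧ r • y = s • b := by
  let _ : LinearOrder X := IsWellOrder.linearOrder WellOrderingRel
  obtain ⟨B, hB, hBb⟩ := exists_isLyndon_isLeadingWord hb
  have key : ∀ {a : FreeLieAlgebra R X}, a ≠ 0 → ⁅a, b⁆ = 0 → IsLeadingWord (toWords R a) B := by
    intro a ha h
    obtain ⟨W, hW, hWa⟩ := exists_isLyndon_isLeadingWord ha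
    have : W = B := by
      refine FreeMonoid.toList.injective (hW.eq_of_append_comm hB ?_)
      by_contra hne
      obtain ⟨z, -, hz⟩ := hWa.exists_coeff_lie_ne_zero hBb fun h' =>
        hne (congrArg FreeMonoid.toList h')
      exact hz (by rw [← LieHom.map_lie, h]; simp)
    exact this ▸ hWa
  refine ⟨(toWords R b).coeff B, (toWords R y).coeff B, hBb.1, (key hy h).1, ?_⟩
  by_contra hne
  refine (key (sub_ne_zero.2 hne) (by simp [h])).1 ?_
  simp [mul_comm]

theorem smul_ne_lie [IsDomain R] {b w : FreeLieAlgebra R X} (hb : b ≠ 0) {s : R} (hs : s ≠ 0) :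
    s • b ≠ ⁅w, b⁆ := by
  intro h
  have hne : (toWords R b).coeff.support.Nonempty := by
    rw [Finsupp.support_nonempty_iff]
    simpa using (map_ne_zero_iff _ toWords_injective).2 hb
  obtain ⟨z, hz, hmin⟩ := (toWords R b).coeff.support.exists_min_image FreeMonoid.length hne
  have hge : LengthGE z.length (toWords R b) := fun t ht =>
    hmin t (Finsupp.mem_support_iff.2 ht)
  have h1 := (lengthGE_one_toWords w).lie hge z (by
    rw [← LieHom.map_lie, ← h]
    simpa using ⟨hs, Finsupp.mem_support_iff.1 hz⟩)
  omega

/-- In a free Lie algebra over a domain, `ad b ^ 2` and `ad b` have the same kernel. -/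
theorem lie_eq_zero_of_lie_lie_eq_zero [IsDomain R] {b w : FreeLieAlgebra R X}
    (h : ⁅b, ⁅b, w⁆⁆ = 0) : ⁅b, w⁆ = 0 := by
  by_contra hne
  have hb : b ≠ 0 := by rintro rfl; simp at hne
  obtain ⟨r, s, hr, hs, hrs⟩ := exists_smul_eq_smul_of_lie_eq_zero hb hne
    (by rw [← lie_skew, h, neg_zero])
  refine smul_ne_lie (w := -(r • w)) hb hs ?_
  rw [← hrs, ← lie_skew, neg_lie, smul_lie, smul_neg]

theorem lengthGE_ad_pow (b a : FreeLieAlgebra R X) (N : ℕ) :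
    LengthGE (N + 1) (toWords R ((LieAlgebra.ad R _ b ^ N) a)) := by
  induction N with
  | zero => simpa using lengthGE_one_toWords a
  | succ N ih =>
    rw [pow_succ', Module.End.mul_apply, LieAlgebra.ad_apply, LieHom.map_lie, add_comm]
    exact (lengthGE_one_toWords b).lie ih

theorem ad_pow_succ_apply_eq_zero [IsDomain R] {b a : FreeLieAlgebra R X} (N : ℕ)
    (h : (LieAlgebra.ad R _ b ^ (N + 1)) a = 0) : ⁅b, a⁆ = 0 := by
  induction N with
  | zero => simpa using h
  | succ N ih =>
    refine ih ?_
    rw [pow_succ', pow_succ', Module.End.mul_apply, Module.End.mul_apply] at h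
    rw [pow_succ', Module.End.mul_apply]
    exact lie_eq_zero_of_lie_lie_eq_zero h

/-- The degree of a solution `u` of `v = ⁅u, b⁆ + r • u` is bounded in terms of `v` and `b`. -/
theorem exists_length_bound [IsDomain R] {b v : FreeLieAlgebra R X} (hb : b ≠ 0) :
    ∃ D : ℕ, ∀ (r : R) (u : FreeLieAlgebra R X), v = ⁅u, b⁆ + r • u →
      ∀ z, (toWords R u).coeff z ≠ 0 → z.length ≤ D := by
  let _ : LinearOrder X := IsWellOrder.linearOrder WellOrderingRel
  obtain ⟨B, hB, hBb⟩ := exists_isLyndon_isLeadingWord hb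
  refine ⟨max B.length ((toWords R v).coeff.support.sup FreeMonoid.length),
    fun r u hu z hz => ?_⟩
  have hu0 : u ≠ 0 := by rintro rfl; simp at hz
  obtain ⟨W, hW, hWu⟩ := exists_isLyndon_isLeadingWord hu0
  refine (length_le_of_wordRank_le (hWu.2 z hz)).trans ?_
  by_cases hWB : W = B
  · rw [hWB]; exact le_max_left _ _
  refine le_max_of_le_right ?_
  obtain ⟨t, ht, hne⟩ := hWu.exists_coeff_lie_ne_zero hBb fun h' =>
    hWB (FreeMonoid.toList.injective (hW.eq_of_append_comm hB (congrArg FreeMonoid.toList h')))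
  have hBpos : 0 < B.length := List.length_pos_iff.2 hB.1
  have hut : (toWords R u).coeff t = 0 := by
    by_contra h'
    have := length_le_of_wordRank_le (hWu.2 t h')
    omega
  have hvt : (toWords R v).coeff t ≠ 0 := by
    rw [hu, map_add, map_smul, LieHom.map_lie]
    simpa [hut] using hne
  have := Finset.le_sup (f := FreeMonoid.length) (Finsupp.mem_support_iff.2 hvt)
  omega

/-- Truncated geometric series for the solution of `v = ⁅u, b⁆ + r • u`. -/
theorem pow_smul_eq_sum_ad_pow {b v u : FreeLieAlgebra R X} {r : R} (h : v = ⁅u, b⁆ + r • u)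
    (N : ℕ) : r ^ N • u =
      ∑ i ∈ Finset.range N, r ^ (N - 1 - i) • (LieAlgebra.ad R _ b ^ i) v +
        (LieAlgebra.ad R _ b ^ N) u := by
  induction N with
  | zero => simp
  | succ N ih =>
    have hru : r • u = v + ⁅b, u⁆ := by rw [h, ← lie_skew b u]; abel
    rw [pow_succ', mul_smul, ih, smul_add, Finset.smul_sum, ← map_smul, hru, map_add,
      Finset.sum_range_succ, pow_succ _ N, Module.End.mul_apply, LieAlgebra.ad_apply]
    have : ∀ i ∈ Finset.range N, r • r ^ (N - 1 - i) • (LieAlgebra.ad R _ b ^ i) v =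
        r ^ (N + 1 - 1 - i) • (LieAlgebra.ad R _ b ^ i) v := by
      intro i hi
      rw [Finset.mem_range] at hi
      rw [smul_smul, ← pow_succ']
      congr 2
      omega
    rw [Finset.sum_congr rfl this]
    simp [add_assoc]

theorem eq_zero_of_forall_natCast_sum_eq_zero [IsDomain R] [CharZero R] {N : ℕ} {c : ℕ → R}
    (h : ∀ n : ℕ, ∑ i ∈ Finset.range N, (n : R) ^ (N - 1 - i) * c i = 0) {i : ℕ} (hi : i < N) :
    c i = 0 := by
  let p : Polynomial R := ∑ i ∈ Finset.range N, Polynomial.monomial (N - 1 - i) (c i)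
  have hp : p = 0 := by
    refine Polynomial.eq_zero_of_infinite_isRoot p
      ((Set.infinite_range_of_injective (Nat.cast_injective (R := R))).mono ?_)
    rintro _ ⟨n, rfl⟩
    simpa [p, Polynomial.IsRoot, Polynomial.eval_finsetSum, mul_comm] using h n
  have hcoeff : p.coeff (N - 1 - i) = c i := by
    rw [Polynomial.finsetSum_coeff, Finset.sum_eq_single_of_mem i (Finset.mem_range.2 hi)]
    · simp
    · intro j hj hji
      rw [Finset.mem_range] at hj
      exact Polynomial.coeff_monomial_of_ne _ (by omega)
  rw [← hcoeff, hp, Polynomial.coeff_zero]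

end Divisibility

/-- Over an integral domain of characteristic zero, if an element `v` of a free Lie
algebra is divisible by `b + n` for every natural number `n` (i.e., for every `n`
there is `uₙ` with `v = ⁅uₙ, b⁆ + n • uₙ`), where `b ≠ 0`, then `v = 0`. -/
theorem eq_zero_of_infinitely_divisible {R : Type*} [CommRing R] [IsDomain R] [CharZero R]
    {X : Type*} (b v : FreeLieAlgebra R X) (hb : b ≠ 0)
    (h : ∀ n : ℕ, ∃ u : FreeLieAlgebra R X, v = ⁅u, b⁆ + (n : R) • u) :
    v = 0 := by
  obtain ⟨D, hD⟩ := exists_length_bound (v := v) hb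
  choose u hu using h
  have hcoeff : ∀ (z : FreeMonoid X) (i : ℕ), D < z.length →
      (toWords R ((LieAlgebra.ad R _ b ^ i) v)).coeff z = 0 := by
    intro z i hz
    refine eq_zero_of_forall_natCast_sum_eq_zero (N := max z.length (i + 1))
      (c := fun i => (toWords R ((LieAlgebra.ad R _ b ^ i) v)).coeff z) (fun n => ?_)
      ((Nat.lt_succ_self i).trans_le (le_max_right _ _))
    have hun : (toWords R (u n)).coeff z = 0 := by
      by_contra hne
      exact absurd (hD _ _ (hu n) z hne) (not_le.2 hz)
    have hpow : (toWords R ((LieAlgebra.ad R _ b ^ max z.length (i + 1)) (u n))).coeff z = 0 := by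
      by_contra hne
      have := lengthGE_ad_pow b (u n) _ z hne
      have := le_max_left z.length (i + 1)
      omega
    have := congrArg (fun a => (toWords R a).coeff z)
      (pow_smul_eq_sum_ad_pow (hu n) (max z.length (i + 1)))
    simpa [hun, hpow, MonoidAlgebra.coeff_sum, Finsupp.finsetSum_apply] using this.symm
  have hnil : (LieAlgebra.ad R _ b ^ D) v = 0 := by
    refine toWords_injective ?_
    ext z
    rw [map_zero]
    by_cases hz : D < z.length
    · simpa using hcoeff z D hz
    · by_contra hne
      have := lengthGE_ad_pow b v D z (by simpa using hne)
      omega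
  have hv : v = ⁅b, -u 0⁆ := by simpa using hu 0
  rw [hv]
  refine ad_pow_succ_apply_eq_zero D ?_
  rw [pow_succ, Module.End.mul_apply, LieAlgebra.ad_apply, ← hv, hnil]
end

section
/- Let R be an integral domain of characteristic zero, X a set, and L the free Lie algebra over R on X. Let x, y ∈ X be distinct, set a = of(x), b = of(y), and for a natural number m define v = a·b(b+1)(b+2)⋯(b+m) as the left-normed product: v₀ = ⁅a, b⁆ and v_k = ⁅v_{k−1}, b⁆ + (k : R) • v_{k−1} for k = 1, …, m, with v = v_m. Then for every α ∈ R: there exists u ∈ L with v = ⁅u, b⁆ + α • u if and only if α = (k : R) for some natural number k with 0 ≤ k ≤ m. -/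
/-- The left-normed product `a·b(b+1)(b+2)⋯(b+m)`: `v₀ = ⁅a, b⁆` and
`v_k = ⁅v_{k-1}, b⁆ + k • v_{k-1}`. -/
noncomputable def vProd {R : Type*} [CommRing R] {X : Type*}
    (a b : FreeLieAlgebra R X) : ℕ → FreeLieAlgebra R X
  | 0 => ⁅a, b⁆
  | k + 1 => ⁅vProd a b k, b⁆ + ((k + 1 : ℕ) : R) • vProd a b k

open Finset in
/-- A Lie homomorphism `φ` with `⁅φ a, φ b⁆ = c • φ a` sends
`a·b(b+1)⋯(b+m)` to `c(c+1)⋯(c+m) • φ a`. -/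
theorem map_vProd_of_lie_eq_smul {R : Type*} [CommRing R] {X : Type*} {L : Type*} [LieRing L]
    [LieAlgebra R L] (φ : FreeLieAlgebra R X →ₗ⁅R⁆ L) (a b : FreeLieAlgebra R X) (c : R)
    (h : ⁅φ a, φ b⁆ = c • φ a) (m : ℕ) :
    φ (vProd a b m) = (∏ k ∈ range (m + 1), (c + (k : R))) • φ a := by
  induction m with
  | zero => simp [vProd, h]
  | succ m ih =>
    rw [vProd, map_add, map_smul, LieHom.map_lie, ih, smul_lie, h, prod_range_succ _ (m + 1),
      smul_smul, smul_smul, ← add_smul]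
    congr 1
    ring

/-- Every factor `b + k` with `k ≤ m` of `a·b(b+1)⋯(b+m)` may be moved to the last place. -/
theorem exists_vProd_eq_lie_add_smul {R : Type*} [CommRing R] {X : Type*}
    (a b : FreeLieAlgebra R X) {k m : ℕ} (hk : k ≤ m) :
    ∃ u : FreeLieAlgebra R X, vProd a b m = ⁅u, b⁆ + (k : R) • u := by
  induction m with
  | zero =>
    obtain rfl : k = 0 := by omega
    exact ⟨a, by simp [vProd]⟩
  | succ m ih =>
    rcases hk.lt_or_eq with hk | rfl
    · obtain ⟨u, hu⟩ := ih (by omega)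
      refine ⟨⁅u, b⁆ + ((m + 1 : ℕ) : R) • u, ?_⟩
      rw [vProd, hu]
      simp only [add_lie, smul_lie, smul_add, smul_smul, mul_comm ((m + 1 : ℕ) : R)]
      abel
    · exact ⟨vProd a b m, rfl⟩

/-- Over an integral domain `R` of characteristic zero, with `a = of x`, `b = of y`
for distinct free generators `x ≠ y`, and `v = a·b(b+1)⋯(b+m)`, an element `α ∈ R`
satisfies `v = ⁅u, b⁆ + α • u` for some `u` iff `α = k` for some natural `k ≤ m`. -/
theorem shift_divisors_of_vProd {R : Type*} [CommRing R] [IsDomain R] [CharZero R]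
    {X : Type*} (x y : X) (hxy : x ≠ y) (m : ℕ) (α : R) :
    (∃ u : FreeLieAlgebra R X,
        vProd (FreeLieAlgebra.of R x) (FreeLieAlgebra.of R y) m
          = ⁅u, FreeLieAlgebra.of R y⁆ + α • u)
      ↔ ∃ k : ℕ, k ≤ m ∧ α = (k : R) := by
  classical
  constructor
  · rintro ⟨u, hu⟩
    let _ : LieRing (Matrix (Fin 2) (Fin 2) R) := LieRing.ofAssociativeRing
    let E : Matrix (Fin 2) (Fin 2) R := !![0, 1; 0, 0]
    let D : Matrix (Fin 2) (Fin 2) R := !![0, 0; 0, -α]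
    let φ := FreeLieAlgebra.lift R (fun z => if z = x then E else D)
    have hx : φ (FreeLieAlgebra.of R x) = E := by simp [φ]
    have hy : φ (FreeLieAlgebra.of R y) = D := by simp [φ, hxy.symm]
    have hED : ⁅E, D⁆ = (-α) • E := by
      ext i j
      fin_cases i <;> fin_cases j <;> simp [E, D, Ring.lie_def]
    have hv := map_vProd_of_lie_eq_smul φ (FreeLieAlgebra.of R x) (FreeLieAlgebra.of R y) (-α)
      (by rw [hx, hy, hED]) m
    rw [hu, map_add, map_smul, LieHom.map_lie, hx, hy] at hv
    have hprod : ∏ k ∈ Finset.range (m + 1), (-α + (k : R)) = 0 := by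
      have hentry := congrFun (congrFun hv 0) 1
      simp [E, D, Ring.lie_def, Matrix.mul_apply, Matrix.vecMul, dotProduct] at hentry
      rw [← hentry]
      ring
    obtain ⟨k, hk, hk0⟩ := Finset.prod_eq_zero_iff.mp hprod
    exact ⟨k, by simpa [Nat.lt_succ_iff] using hk, (neg_add_eq_zero.mp hk0)⟩
  · rintro ⟨k, hk, rfl⟩
    exact exists_vProd_eq_lie_add_smul _ _ hk
end
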